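/- Let 1 < α ≤ 2, J(r) = r^{-α}, h_* > 0 and δ > 0, and define the field h by h_0 = h_* and h_x = h_*|x|^{−δ} for x ≠ 0. Assume either (i) δ > α − 1, or (ii) 1 < α < 2, δ = α − 1 and h_* < (8−4α)/(2^{3−α}+6−3α), or (iii) α = 2, δ = 1 and h_* < 4/(3+2·log 2). Then there exists R ∈ ℕ such that, with the truncated field ĥ defined by ĥ_x = 0 for |x| ≤ R and ĥ_x = h_x otherwise, for every ε ∈ (0,1) there exists β̄ > 0 so that for all β ≥ β̄ and all L ∈ ℕ one has ⟨σ₀⟩⁺_{J,ĥ,β,L} ≥ 1 − ε and ⟨σ₀⟩⁻_{J,ĥ,β,L} ≤ −(1 − ε). -/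

import Mathlib

noncomputable section

/-! Configurations in `Ω_L^+` (equal to `+1` off `[-L,L]`) are encoded by the finite set
`A ⊆ [-L,L]` of their minus sites, and configurations in `Ω_L^-` by the finite set of
their plus sites. -/

/-- The spin configuration with plus boundary condition and minus sites `A`. -/
def spinP (A : Finset ℤ) (x : ℤ) : ℝ := if x ∈ A then -1 else 1

/-- The spin configuration with minus boundary condition and plus sites `A`. -/
def spinM (A : Finset ℤ) (x : ℤ) : ℝ := if x ∈ A then 1 else -1

/-- The Hamiltonian `H_J(σ) = ∑_{x<y} |x−y|^{-α} (1 − σ_x σ_y)`, as a `tsum` over pairs. -/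
def hamJ (α : ℝ) (σ : ℤ → ℝ) : ℝ :=
  ∑' p : ℤ × ℤ, if p.1 < p.2 then |(p.1 : ℝ) - (p.2 : ℝ)| ^ (-α) * (1 - σ p.1 * σ p.2) else 0

/-- The Hamiltonian with field, plus boundary condition. -/
def hamP (α : ℝ) (h : ℤ → ℝ) (σ : ℤ → ℝ) : ℝ := hamJ α σ + ∑' x : ℤ, h x * (1 - σ x)

/-- The Hamiltonian with field, minus boundary condition. -/
def hamM (α : ℝ) (h : ℤ → ℝ) (σ : ℤ → ℝ) : ℝ := hamJ α σ - ∑' x : ℤ, h x * (1 + σ x)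

/-- Subsets of the box `[-L, L]`. -/
def box (L : ℕ) : Finset (Finset ℤ) := (Finset.Icc (-(L : ℤ)) (L : ℤ)).powerset

/-- The finite-volume Gibbs expectation `⟨σ₀⟩⁺_{J,h,β,L}`. -/
def avgP (α : ℝ) (h : ℤ → ℝ) (β : ℝ) (L : ℕ) : ℝ :=
  (∑ A ∈ box L, spinP A 0 * Real.exp (-β * hamP α h (spinP A))) /
    ∑ A ∈ box L, Real.exp (-β * hamP α h (spinP A))

/-- The finite-volume Gibbs expectation `⟨σ₀⟩⁻_{J,h,β,L}`. -/
def avgM (α : ℝ) (h : ℤ → ℝ) (β : ℝ) (L : ℕ) : ℝ :=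
  (∑ A ∈ box L, spinM A 0 * Real.exp (-β * hamM α h (spinM A))) /
    ∑ A ∈ box L, Real.exp (-β * hamM α h (spinM A))

/-- The polynomially decaying field: `h 0 = h⋆`, `h x = h⋆ |x|^{-δ}` for `x ≠ 0`. -/
def hf (hs δ : ℝ) (x : ℤ) : ℝ := if x = 0 then hs else hs * |(x : ℝ)| ^ (-δ)

/-- The field truncated to vanish on `[-R, R]`. -/
def hfTrunc (hs δ : ℝ) (R : ℕ) (x : ℤ) : ℝ := if |x| ≤ (R : ℤ) then 0 else hf hs δ x

/-! A Peierls argument. A configuration is described by its flip points, the bonds across which the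
spin changes, and these are partitioned into contours such that any two of them are far apart on the
scale of the smaller one. Erasing the contour `γ` around the origin flips the sites `I` it encloses
and changes the energy by twice the field on `I`, minus twice the cut of `I`, plus four times the
interaction of the pairs separated both by `I` and by the rest of the configuration. The last term
is a small fraction of the cut because contours are far apart. The field on `I` is at most `κ` times
the cut, with `κ < 1`: the field is largest when `I` is centred at the origin, the cut is smallest
when `I` is an interval, and in the latter the pairs at distance `r` alone contribute `2r·r^(-α)`,
as much as the field bound at the two sites `r` and `-r`. Hence the gain in energy is a positive
multiple of the cut, which in turn dominates the sum over the points of `γ` of the logarithm of the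
distance to the preceding one. There are few contours around the origin for which that sum is small,
so that the sum over contours of the Boltzmann factors is small at low temperature. -/

namespace LongRangeIsing

open scoped ENNReal

section

variable {J : ℤ → ℝ≥0∞} {α : ℝ} {A B : Finset ℤ} {x y k z : ℤ}

/-! ### Couplings and cuts -/

/-- A summable ferromagnetic pair coupling which is nonincreasing in the distance. The sites `x` and
`y` interact with strength `J (y - x)`; as `J` vanishes on nonpositive integers, a sum over ordered
pairs of sites counts every pair once. -/
structure IsCoupling (J : ℤ → ℝ≥0∞) : Prop where
  zero_of_nonpos : ∀ z ≤ 0, J z = 0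
  antitoneOn : AntitoneOn J (Set.Ioi 0)
  tsum_ne_top : ∑' z, J z ≠ ⊤

/-- The power-law coupling `J(r) = r ^ (-α)`. -/
def kern (α : ℝ) (z : ℤ) : ℝ≥0∞ := if 0 < z then ENNReal.ofReal ((z : ℝ) ^ (-α)) else 0

/-- The total strength of the couplings over distances larger than `k`. -/
def tailSum (J : ℤ → ℝ≥0∞) (k : ℤ) : ℝ≥0∞ := ∑' z : ℤ, if k < z then J z else 0

/-- Exactly one of the sites `x` and `y` belongs to `A`. -/
abbrev Separates (A : Finset ℤ) (x y : ℤ) : Prop := ¬(x ∈ A ↔ y ∈ A)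

/-- The interaction of `x` with the sites to its right which are separated from it by `A`. -/
def rightCut (J : ℤ → ℝ≥0∞) (A : Finset ℤ) (x : ℤ) : ℝ≥0∞ :=
  ∑' y : ℤ, if Separates A x y then J (y - x) else 0

/-- The interaction of `y` with the sites to its left which are separated from it by `A`. -/
def leftCut (J : ℤ → ℝ≥0∞) (A : Finset ℤ) (y : ℤ) : ℝ≥0∞ :=
  ∑' x : ℤ, if Separates A x y then J (y - x) else 0

/-- The interaction between `A` and its complement, which is half the energy of the configuration
whose spins differ from the boundary condition exactly on `A`. -/
def cut (J : ℤ → ℝ≥0∞) (A : Finset ℤ) : ℝ≥0∞ := ∑' x : ℤ, rightCut J A x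

/-- The interaction of the pairs of sites which are separated both by `B` and by `I`. -/
def crossCut (J : ℤ → ℝ≥0∞) (B I : Finset ℤ) : ℝ≥0∞ :=
  ∑' x : ℤ, ∑' y : ℤ, if Separates I x y ∧ Separates B x y then J (y - x) else 0

lemma tsum_leftCut (J : ℤ → ℝ≥0∞) (A : Finset ℤ) : ∑' y : ℤ, leftCut J A y = cut J A :=
  ENNReal.tsum_comm

lemma tsum_ite_mem (A : Finset ℤ) (F : ℤ → ℝ≥0∞) :
    ∑' x : ℤ, (if x ∈ A then F x else 0) = ∑ x ∈ A, F x := by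
  rw [tsum_eq_sum (s := A) fun x hx => if_neg hx]
  exact Finset.sum_congr rfl fun x hx => if_pos hx

lemma tsum_tsum_ite_mem_left (A : Finset ℤ) (F : ℤ → ℤ → ℝ≥0∞) :
    ∑' x : ℤ, ∑' y : ℤ, (if x ∈ A then F x y else 0) = ∑ x ∈ A, ∑' y : ℤ, F x y := by
  rw [← tsum_ite_mem]
  refine tsum_congr fun x => ?_
  split_ifs <;> simp

lemma tsum_tsum_ite_mem_right (A : Finset ℤ) (F : ℤ → ℤ → ℝ≥0∞) :
    ∑' x : ℤ, ∑' y : ℤ, (if y ∈ A then F x y else 0) = ∑ y ∈ A, ∑' x : ℤ, F x y := by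
  rw [ENNReal.tsum_comm, tsum_tsum_ite_mem_left A fun y x => F x y]

lemma tailSum_antitone (J : ℤ → ℝ≥0∞) : Antitone (tailSum J) := by
  refine fun k l hkl => ENNReal.tsum_le_tsum fun z => ?_
  by_cases hz : l < z
  · simp [hz, hkl.trans_lt hz]
  · simp [hz]

lemma tailSum_eq_add_tailSum_add_one (J : ℤ → ℝ≥0∞) (k : ℤ) :
    tailSum J k = J (k + 1) + tailSum J (k + 1) := by
  unfold tailSum
  rw [← tsum_ite_eq (k + 1) J, ← ENNReal.tsum_add]
  refine tsum_congr fun z => ?_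
  rcases lt_trichotomy z (k + 1) with h | rfl | h
  · simp [h.ne, not_lt.mpr h.le, not_lt.mpr (Int.lt_add_one_iff.mp h)]
  · simp
  · simp [h.ne', h, (lt_add_one k).trans h]

lemma tsum_ite_lt_sub_right (J : ℤ → ℝ≥0∞) (x k : ℤ) :
    ∑' y : ℤ, (if k < y - x then J (y - x) else 0) = tailSum J k :=
  (Equiv.subRight x).tsum_eq fun z => if k < z then J z else 0

lemma tsum_ite_lt_sub_left (J : ℤ → ℝ≥0∞) (y k : ℤ) :
    ∑' x : ℤ, (if k < y - x then J (y - x) else 0) = tailSum J k :=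
  (Equiv.subLeft y).tsum_eq fun z => if k < z then J z else 0

lemma tailSum_zero_eq_sum_add (J : ℤ → ℝ≥0∞) (n : ℕ) :
    tailSum J 0 = ∑ k ∈ Finset.range n, J (k + 1) + tailSum J n := by
  induction n with
  | zero => simp
  | succ n ih =>
    rw [ih, Finset.sum_range_succ, tailSum_eq_add_tailSum_add_one J n, add_assoc]
    push_cast
    rfl

namespace IsCoupling

lemma ne_top (hJ : IsCoupling J) (z : ℤ) : J z ≠ ⊤ :=
  ENNReal.ne_top_of_tsum_ne_top hJ.tsum_ne_top z

lemma tailSum_zero_eq_tsum (hJ : IsCoupling J) : tailSum J 0 = ∑' z, J z := by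
  refine tsum_congr fun z => ite_eq_left_iff.mpr fun hz => ?_
  exact (hJ.zero_of_nonpos z (not_lt.mp hz)).symm

end IsCoupling

lemma cut_symmDiff_add (J : ℤ → ℝ≥0∞) (B I : Finset ℤ) :
    cut J (symmDiff B I) + 2 * crossCut J B I = cut J B + cut J I := by
  unfold cut crossCut rightCut
  rw [← ENNReal.tsum_mul_left, ← ENNReal.tsum_add, ← ENNReal.tsum_add]
  refine tsum_congr fun x => ?_
  rw [← ENNReal.tsum_mul_left, ← ENNReal.tsum_add, ← ENNReal.tsum_add]
  refine tsum_congr fun y => ?_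
  by_cases hxB : x ∈ B <;> by_cases hyB : y ∈ B <;> by_cases hxI : x ∈ I <;>
    by_cases hyI : y ∈ I <;>
    simp [Separates, Finset.mem_symmDiff, hxB, hyB, hxI, hyI, two_mul]

lemma tsum_tsum_ite_mem_add_ite_mem (J : ℤ → ℝ≥0∞) (A : Finset ℤ) :
    ∑' x : ℤ, ∑' y : ℤ, ((if x ∈ A then J (y - x) else 0) + if y ∈ A then J (y - x) else 0) =
      2 * A.card * ∑' z, J z := by
  simp_rw [ENNReal.tsum_add]
  rw [tsum_tsum_ite_mem_left, tsum_tsum_ite_mem_right]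
  have hright (x : ℤ) : ∑' y : ℤ, J (y - x) = ∑' z, J z := (Equiv.subRight x).tsum_eq J
  have hleft (y : ℤ) : ∑' x : ℤ, J (y - x) = ∑' z, J z := (Equiv.subLeft y).tsum_eq J
  simp only [hright, hleft, Finset.sum_const, nsmul_eq_mul]
  ring

lemma cut_le (J : ℤ → ℝ≥0∞) (A : Finset ℤ) : cut J A ≤ 2 * A.card * ∑' z, J z := by
  rw [← tsum_tsum_ite_mem_add_ite_mem]
  refine ENNReal.tsum_le_tsum fun x => ENNReal.tsum_le_tsum fun y => ?_
  by_cases hx : x ∈ A <;> by_cases hy : y ∈ A <;> simp [hx, hy]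

lemma cut_ne_top (hJ : ∑' z, J z ≠ ⊤) (A : Finset ℤ) : cut J A ≠ ⊤ :=
  ne_top_of_le_ne_top (by finiteness) (cut_le J A)

lemma cut_singleton (hJ : IsCoupling J) (x : ℤ) : cut J {x} = 2 * ∑' z, J z := by
  have h := tsum_tsum_ite_mem_add_ite_mem J {x}
  rw [Finset.card_singleton, Nat.cast_one, mul_one] at h
  rw [← h]
  refine tsum_congr fun a => tsum_congr fun b => ?_
  by_cases ha : a = x <;> by_cases hb : b = x <;> simp [ha, hb, hJ.zero_of_nonpos 0 le_rfl]

/-! ### The rearrangement inequality -/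

lemma sum_le_sum_range_card_of_antitoneOn {M : Type*} [AddCommMonoid M] [PartialOrder M]
    [IsOrderedAddMonoid M] {f : ℤ → M} (hf : AntitoneOn f (Set.Ioi 0)) (s : Finset ℤ)
    (hs : ∀ z ∈ s, 0 < z) : ∑ z ∈ s, f z ≤ ∑ k ∈ Finset.range s.card, f (k + 1) := by
  induction s using Finset.induction_on_max with
  | empty => simp
  | insert a s ha ih =>
    have has : a ∉ s := fun h => (ha a h).false
    have hs' : ∀ z ∈ s, 0 < z := fun z hz => hs z (Finset.mem_insert_of_mem hz)
    have hcard : (s.card : ℤ) + 1 ≤ a := by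
      have hsub : s ⊆ Finset.Ioo 0 a := fun z hz => Finset.mem_Ioo.mpr ⟨hs' z hz, ha z hz⟩
      have hcard_le := Finset.card_le_card hsub
      rw [Int.card_Ioo] at hcard_le
      have := hs a (Finset.mem_insert_self _ _)
      omega
    rw [Finset.sum_insert has, Finset.card_insert_of_notMem has, Finset.sum_range_succ, add_comm]
    have hpos : (0 : ℤ) < s.card + 1 := by positivity
    exact add_le_add (ih hs') (hf hpos (hpos.trans_le hcard) hcard)

lemma sum_comp_le_sum_range_card_of_antitoneOn {ι M : Type*} [AddCommMonoid M] [PartialOrder M]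
    [IsOrderedAddMonoid M] {f : ℤ → M} (hf : AntitoneOn f (Set.Ioi 0)) (s : Finset ι) (g : ι → ℤ)
    (hinj : Set.InjOn g s) (hpos : ∀ i ∈ s, 0 < g i) :
    ∑ i ∈ s, f (g i) ≤ ∑ k ∈ Finset.range s.card, f (k + 1) := by
  rw [← Finset.sum_image hinj, ← Finset.card_image_of_injOn hinj]
  exact sum_le_sum_range_card_of_antitoneOn hf _ (by simpa using hpos)

lemma crossCut_singleton_le (hJ : IsCoupling J) (hB : ∀ y ∈ B, y < x) :
    crossCut J B {x} ≤ ∑ y ∈ B, J (x - y) := by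
  have hpair (a b : ℤ) : (if Separates {x} a b ∧ Separates B a b then J (b - a) else 0) ≤
      if b ∈ ({x} : Finset ℤ) then (if a ∈ B then J (b - a) else 0) else 0 := by
    have hxB : x ∉ B := fun h => (hB x h).false
    by_cases hb : b = x
    · subst hb
      by_cases ha : a ∈ B
      · simp only [ha, Finset.mem_singleton, if_true]
        split_ifs <;> simp
      · simp [ha, hxB]
    · by_cases ha : a = x
      · subst ha
        by_cases hbB : b ∈ B
        · simp [hJ.zero_of_nonpos _ (sub_nonpos.mpr (hB b hbB).le)]
        · simp [hxB, hbB]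
      · simp [ha, hb]
  refine (ENNReal.tsum_le_tsum fun a => ENNReal.tsum_le_tsum fun b => hpair a b).trans_eq ?_
  rw [tsum_tsum_ite_mem_right, Finset.sum_singleton, tsum_ite_mem]

lemma cut_add_tailSum_card_le_cut_insert (hJ : IsCoupling J) (hB : ∀ y ∈ B, y < x) :
    cut J B + 2 * tailSum J B.card ≤ cut J (insert x B) := by
  have hxB : x ∉ B := fun h => (hB x h).false
  have hcross : crossCut J B {x} ≤ ∑ k ∈ Finset.range B.card, J (k + 1) :=
    (crossCut_singleton_le hJ hB).trans <| sum_comp_le_sum_range_card_of_antitoneOn hJ.antitoneOn B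
      (x - ·) (sub_right_injective.injOn) fun y hy => sub_pos.mpr (hB y hy)
  have hinsert : symmDiff B {x} = insert x B := by
    rw [(Finset.disjoint_singleton_right.mpr hxB).symmDiff_eq_sup, Finset.sup_eq_union,
      Finset.union_comm, ← Finset.insert_eq]
  have hfin : 2 * ∑ k ∈ Finset.range B.card, J (k + 1) ≠ ⊤ :=
    ENNReal.mul_ne_top (by simp) (ENNReal.sum_ne_top.mpr fun _ _ => hJ.ne_top _)
  refine (ENNReal.add_le_add_iff_right hfin).mp ?_
  calc cut J B + 2 * tailSum J B.card + 2 * ∑ k ∈ Finset.range B.card, J (k + 1)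
      = cut J B + cut J {x} := by
        rw [cut_singleton hJ, ← hJ.tailSum_zero_eq_tsum, tailSum_zero_eq_sum_add J B.card]
        ring
    _ = cut J (insert x B) + 2 * crossCut J B {x} := by rw [← cut_symmDiff_add, hinsert]
    _ ≤ cut J (insert x B) + 2 * ∑ k ∈ Finset.range B.card, J (k + 1) := by gcongr

/-- The left-hand side is the cut of an interval of the same cardinality. -/
lemma sum_range_add_card_mul_tailSum_le_cut (hJ : IsCoupling J) (A : Finset ℤ) :
    2 * ∑ k ∈ Finset.range A.card, ((k : ℝ≥0∞) + 1) * J (k + 1) + 2 * A.card * tailSum J A.card ≤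
      cut J A := by
  induction A using Finset.induction_on_max with
  | empty => simp
  | insert a s ha ih =>
    have has : a ∉ s := fun h => (ha a h).false
    refine le_trans (le_of_eq ?_)
      ((add_le_add_left ih _).trans (cut_add_tailSum_card_le_cut_insert hJ ha))
    rw [Finset.card_insert_of_notMem has, Finset.sum_range_succ,
      tailSum_eq_add_tailSum_add_one J s.card]
    push_cast
    ring

lemma card_mul_tailSum_le_cut (hJ : IsCoupling J) (hA : A.Nonempty) :
    2 * A.card * tailSum J (A.card - 1) ≤ cut J A := by
  refine le_trans ?_ (sum_range_add_card_mul_tailSum_le_cut hJ A)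
  obtain ⟨m, hm⟩ := Nat.exists_eq_add_one.mpr hA.card_pos
  rw [hm, Finset.sum_range_succ]
  push_cast
  rw [add_sub_cancel_right, tailSum_eq_add_tailSum_add_one J m]
  calc 2 * ((m : ℝ≥0∞) + 1) * (J (m + 1) + tailSum J (m + 1))
      = 2 * (((m : ℝ≥0∞) + 1) * J (m + 1)) + 2 * (m + 1) * tailSum J (m + 1) := by ring
    _ ≤ _ := by gcongr; exact le_add_self

lemma sum_erase_zero_le_two_mul_sum_range {f : ℤ → ℝ≥0∞} (hf : AntitoneOn f (Set.Ioi 0))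
    (heven : Function.Even f) (A : Finset ℤ) :
    ∑ x ∈ A.erase 0, f x ≤ 2 * ∑ k ∈ Finset.range A.card, f (k + 1) := by
  have hhalf (s : Finset ℤ) (hs : s ⊆ A.erase 0) (g : ℤ → ℤ) (hg : g.Injective)
      (hpos : ∀ x ∈ s, 0 < g x) (hfg : ∀ x, f (g x) = f x) :
      ∑ x ∈ s, f x ≤ ∑ k ∈ Finset.range A.card, f (k + 1) := by
    rw [← Finset.sum_congr rfl fun x _ => hfg x]
    exact (sum_comp_le_sum_range_card_of_antitoneOn hf s g hg.injOn hpos).trans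
      (Finset.sum_le_sum_of_subset (Finset.range_mono
        (Finset.card_le_card (hs.trans (Finset.erase_subset _ _)))))
  rw [← Finset.sum_filter_add_sum_filter_not (A.erase 0) (0 < ·), two_mul]
  refine add_le_add
    (hhalf _ (Finset.filter_subset _ _) id Function.injective_id (by simp) (by simp))
    (hhalf _ (Finset.filter_subset _ _) (-·) neg_injective (fun x hx => ?_) heven)
  have hx' := Finset.mem_filter.mp hx
  have := Finset.ne_of_mem_erase hx'.1
  omega

/-! ### Power-law couplings -/

lemma kern_one (α : ℝ) : kern α 1 = 1 := by
  simp [kern]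

lemma kern_antitoneOn (hα : 0 ≤ α) : AntitoneOn (kern α) (Set.Ioi 0) := by
  intro z (hz : 0 < z) w (hw : 0 < w) hzw
  simp only [kern, hz, hw, if_true]
  exact ENNReal.ofReal_le_ofReal <|
    Real.rpow_le_rpow_of_nonpos (by exact_mod_cast hz) (by exact_mod_cast hzw) (by linarith)

lemma isCoupling_kern (hα : 1 < α) : IsCoupling (kern α) where
  zero_of_nonpos z hz := if_neg hz.not_gt
  antitoneOn := kern_antitoneOn (by linarith)
  tsum_ne_top := by
    refine ne_top_of_le_ne_top (Real.summable_abs_int_rpow hα).tsum_ofReal_ne_top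
      (ENNReal.tsum_le_tsum fun z => ?_)
    unfold kern
    split_ifs with hz
    · rw [abs_of_pos (by exact_mod_cast hz)]
    · exact zero_le

lemma kern_ne_top : kern α z ≠ ⊤ := by
  unfold kern
  split_ifs <;> simp

lemma inv_sq_le_kern (hα : α ≤ 2) (hz : 0 < z) :
    ENNReal.ofReal (1 / (z : ℝ) ^ 2) ≤ kern α z := by
  have hz' : (1 : ℝ) ≤ z := by exact_mod_cast hz
  have hpow : 1 / (z : ℝ) ^ 2 = (z : ℝ) ^ (-2 : ℝ) := by
    rw [Real.rpow_neg (by linarith), one_div]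
    norm_cast
  rw [kern, if_pos hz, hpow]
  exact ENNReal.ofReal_le_ofReal (Real.rpow_le_rpow_of_exponent_le hz' (by linarith))

lemma kern_mul (α : ℝ) (M : ℕ) [NeZero M] (hz : 0 < z) :
    kern α (M * z) = ENNReal.ofReal ((M : ℝ) ^ (-α)) * kern α z := by
  have hM : (0 : ℤ) < M := by exact_mod_cast Nat.pos_of_neZero M
  have hz' : (0 : ℝ) ≤ z := by exact_mod_cast hz.le
  rw [kern, kern, if_pos (mul_pos hM hz), if_pos hz, ← ENNReal.ofReal_mul (by positivity)]
  push_cast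
  rw [Real.mul_rpow M.cast_nonneg hz']

/-- Each `s ≥ n` is responsible for the `M` distances `s * M, …, s * M + (M - 1)`. -/
lemma tailSum_mul_le (hα : 0 ≤ α) (M : ℕ) [NeZero M] {n : ℤ} (hn : 0 < n) :
    tailSum (kern α) (M * n) ≤
      ENNReal.ofReal ((M : ℝ) ^ (1 - α)) * tailSum (kern α) (n - 1) := by
  have hM : (0 : ℤ) < M := by exact_mod_cast Nat.pos_of_neZero M
  have hM' : (0 : ℝ) < M := by exact_mod_cast hM
  have hpow : (M : ℝ≥0∞) * ENNReal.ofReal ((M : ℝ) ^ (-α)) =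
      ENNReal.ofReal ((M : ℝ) ^ (1 - α)) := by
    rw [← ENNReal.ofReal_natCast, ← ENNReal.ofReal_mul hM'.le, sub_eq_add_neg, Real.rpow_add hM',
      Real.rpow_one]
  unfold tailSum
  rw [← (Int.divModEquiv M).symm.tsum_eq, ENNReal.tsum_prod', ← ENNReal.tsum_mul_left]
  refine ENNReal.tsum_le_tsum fun s => ?_
  have hblock (j : Fin M) : (if M * n < (Int.divModEquiv M).symm (s, j) then
      kern α ((Int.divModEquiv M).symm (s, j)) else 0) ≤
      if n - 1 < s then ENNReal.ofReal ((M : ℝ) ^ (-α)) * kern α s else 0 := by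
    have hval : (Int.divModEquiv M).symm (s, j) = s * M + (j : ℕ) := by
      simp [Int.divModEquiv]
    have hj : ((j : ℕ) : ℤ) < M := by exact_mod_cast j.2
    rw [hval]
    by_cases hs : n - 1 < s
    · rw [if_pos hs, ← kern_mul α M (by omega)]
      split_ifs
      · have : 0 < M * s := mul_pos hM (by omega)
        exact kern_antitoneOn hα this (by simp only [Set.mem_Ioi]; nlinarith) (by nlinarith)
      · exact zero_le
    · rw [if_neg (by nlinarith)]
      exact zero_le
  refine (ENNReal.tsum_le_tsum hblock).trans_eq ?_
  rw [tsum_fintype, Finset.sum_const, Finset.card_univ, Fintype.card_fin, nsmul_eq_mul]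
  split_ifs
  · rw [← mul_assoc, hpow]
  · simp

lemma sum_rpow_le_cut (hα : 1 < α) (A : Finset ℤ) :
    ∑ x ∈ A.erase 0, ENNReal.ofReal (|(x : ℝ)| ^ (1 - α)) ≤ cut (kern α) A := by
  have hanti : AntitoneOn (fun z : ℤ => ENNReal.ofReal (|(z : ℝ)| ^ (1 - α))) (Set.Ioi 0) := by
    intro z hz w _ hzw
    have hz' : (0 : ℝ) < z := by exact_mod_cast hz
    have hzw' : (z : ℝ) ≤ w := by exact_mod_cast hzw
    simp only [abs_of_pos hz', abs_of_pos (hz'.trans_le hzw')]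
    exact ENNReal.ofReal_le_ofReal (Real.rpow_le_rpow_of_nonpos hz' hzw' (by linarith))
  have hkern (k : ℕ) :
      ENNReal.ofReal (|((k + 1 : ℤ) : ℝ)| ^ (1 - α)) = ((k : ℝ≥0∞) + 1) * kern α (k + 1) := by
    have hk : (0 : ℝ) < k + 1 := by positivity
    have hcast : (k : ℝ≥0∞) + 1 = ENNReal.ofReal (k + 1) := by
      exact_mod_cast (ENNReal.ofReal_natCast (k + 1)).symm
    rw [kern, if_pos (by positivity), hcast, ← ENNReal.ofReal_mul hk.le]
    push_cast
    rw [abs_of_pos hk, sub_eq_add_neg, Real.rpow_add hk, Real.rpow_one]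
  calc _ ≤ 2 * ∑ k ∈ Finset.range A.card, ENNReal.ofReal (|((k + 1 : ℤ) : ℝ)| ^ (1 - α)) :=
        sum_erase_zero_le_two_mul_sum_range hanti (fun z => by simp) A
    _ = 2 * ∑ k ∈ Finset.range A.card, ((k : ℝ≥0∞) + 1) * kern α (k + 1) := by simp_rw [hkern]
    _ ≤ cut (kern α) A :=
        le_self_add.trans (sum_range_add_card_mul_tailSum_le_cut (isCoupling_kern hα) A)

end

section

variable {A γ : Finset ℤ} {x y p : ℤ}

/-! ### Flip points and enclosed sites -/

/-- The number of points of `γ` in `(-∞, x]`. -/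
def countLE (γ : Finset ℤ) (x : ℤ) : ℕ := (γ.filter (· ≤ x)).card

/-- The number of points of `γ` in `(x, y]`. -/
def countIoc (γ : Finset ℤ) (x y : ℤ) : ℕ := (γ.filter fun p => x < p ∧ p ≤ y).card

/-- The smallest interval of sites containing every site surrounded by `γ`, a set of flip points;
a flip point `p` stands for the bond between the sites `p - 1` and `p`. -/
def hull (γ : Finset ℤ) : Finset ℤ := (γ ×ˢ γ).biUnion fun p => Finset.Ico p.1 p.2

/-- The sites surrounded by `γ`, which form the set whose flip points are `γ`. -/
def enclosed (γ : Finset ℤ) : Finset ℤ := (hull γ).filter fun x => Odd (countLE γ x)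

/-- The flip points of `A`. -/
def flips (A : Finset ℤ) : Finset ℤ := (A ∪ A.image (· + 1)).filter fun p => Separates A (p - 1) p

lemma countLE_add_countIoc (γ : Finset ℤ) (h : x ≤ y) :
    countLE γ y = countLE γ x + countIoc γ x y := by
  rw [countLE, countLE, countIoc, ← Finset.card_filter_add_card_filter_not (· ≤ x),
    Finset.filter_filter, Finset.filter_filter]
  congr 2 <;> exact Finset.filter_congr fun p _ => by omega

lemma countLE_add_one (γ : Finset ℤ) (x : ℤ) :
    countLE γ (x + 1) = countLE γ x + if x + 1 ∈ γ then 1 else 0 := by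
  have hfilter : γ.filter (fun p => x < p ∧ p ≤ x + 1) = γ.filter (· = x + 1) :=
    Finset.filter_congr fun p _ => by omega
  rw [countLE_add_countIoc γ (lt_add_one x).le, countIoc, hfilter, Finset.filter_eq']
  split_ifs <;> simp

lemma mem_hull : x ∈ hull γ ↔ ∃ p ∈ γ, ∃ q ∈ γ, p ≤ x ∧ x < q := by
  simp only [hull, Finset.mem_biUnion, Finset.mem_product, Finset.mem_Ico, Prod.exists]
  grind

lemma exists_le_of_odd_countLE (h : Odd (countLE γ x)) : ∃ p ∈ γ, p ≤ x := by
  obtain ⟨p, hp⟩ := Finset.card_pos.mp h.pos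
  exact ⟨p, Finset.mem_filter.mp hp⟩

lemma exists_lt_of_odd_countLE (hγ : Even γ.card) (h : Odd (countLE γ x)) : ∃ p ∈ γ, x < p := by
  by_contra! hle
  rw [countLE, Finset.filter_true_of_mem hle] at h
  exact Nat.not_even_iff_odd.mpr h hγ

lemma mem_enclosed (hγ : Even γ.card) : x ∈ enclosed γ ↔ Odd (countLE γ x) := by
  simp only [enclosed, Finset.mem_filter, and_iff_right_iff_imp]
  intro h
  obtain ⟨p, hp, hpx⟩ := exists_le_of_odd_countLE h
  obtain ⟨q, hq, hxq⟩ := exists_lt_of_odd_countLE hγ h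
  exact mem_hull.mpr ⟨p, hp, q, hq, hpx, hxq⟩

lemma separates_enclosed_iff (hγ : Even γ.card) (h : x ≤ y) :
    Separates (enclosed γ) x y ↔ Odd (countIoc γ x y) := by
  rw [Separates, mem_enclosed hγ, mem_enclosed hγ, countLE_add_countIoc γ h]
  grind

lemma exists_mem_of_odd_countIoc (h : Odd (countIoc γ x y)) : ∃ p ∈ γ, x < p ∧ p ≤ y := by
  obtain ⟨p, hp⟩ := Finset.card_pos.mp h.pos
  exact ⟨p, Finset.mem_filter.mp hp⟩

lemma mem_hull_or_mem_hull (hγ : Even γ.card) (h : Odd (countIoc γ x y)) :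
    x ∈ hull γ ∨ y ∈ hull γ := by
  obtain ⟨p, hp, hxp, hpy⟩ := exists_mem_of_odd_countIoc h
  obtain ⟨q, hq, hqxy⟩ : ∃ q ∈ γ, ¬(x < q ∧ q ≤ y) := by
    by_contra! hall
    rw [countIoc, Finset.filter_true_of_mem hall] at h
    exact Nat.not_even_iff_odd.mpr h hγ
  rcases le_or_gt q x with hqx | hxq
  · exact Or.inl (mem_hull.mpr ⟨q, hq, p, hp, hqx, hxp⟩)
  · exact Or.inr (mem_hull.mpr ⟨p, hp, q, hq, hpy, not_le.mp fun h => hqxy ⟨hxq, h⟩⟩)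

lemma mem_flips : p ∈ flips A ↔ Separates A (p - 1) p := by
  simp only [flips, Finset.mem_filter, Finset.mem_union, Finset.mem_image, and_iff_right_iff_imp]
  intro h
  by_cases hp : p ∈ A
  · exact Or.inl hp
  · exact Or.inr ⟨p - 1, by tauto, by ring⟩

lemma flips_subset_Icc {a b : ℤ} (hA : A ⊆ Finset.Icc a b) :
    flips A ⊆ Finset.Icc a (b + 1) := by
  intro p hp
  have hsite : p ∈ A ∨ p - 1 ∈ A := by
    have := mem_flips.mp hp
    tauto
  rcases hsite with h | h <;>
  · have := Finset.mem_Icc.mp (hA h)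
    rw [Finset.mem_Icc]
    omega

lemma exists_subset_Icc (A : Finset ℤ) : ∃ N : ℕ, A ⊆ Finset.Icc (-(N : ℤ)) N := by
  refine ⟨A.sup Int.natAbs, fun x hx => ?_⟩
  have : x.natAbs ≤ A.sup Int.natAbs := Finset.le_sup (f := Int.natAbs) hx
  rw [Finset.mem_Icc]
  omega

lemma mem_iff_odd_countLE_flips (A : Finset ℤ) (x : ℤ) : x ∈ A ↔ Odd (countLE (flips A) x) := by
  obtain ⟨N, hN⟩ := exists_subset_Icc A
  have hleft (y : ℤ) (hy : y < -(N : ℤ)) : y ∈ A ↔ Odd (countLE (flips A) y) := by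
    have hyA : y ∉ A := fun h => by have := Finset.mem_Icc.mp (hN h); omega
    have hcount : ¬Odd (countLE (flips A) y) := fun h => by
      obtain ⟨p, hp, hpy⟩ := exists_le_of_odd_countLE h
      have := Finset.mem_Icc.mp (flips_subset_Icc hN hp)
      omega
    exact iff_of_false hyA hcount
  have hstep (y : ℤ) (hy : y ∈ A ↔ Odd (countLE (flips A) y)) :
      y + 1 ∈ A ↔ Odd (countLE (flips A) (y + 1)) := by
    have hflip : y + 1 ∈ flips A ↔ Separates A y (y + 1) := by
      rw [mem_flips, add_sub_cancel_right]
    rw [countLE_add_one]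
    split_ifs with h
    · rw [Nat.odd_add_one, ← hy]
      tauto
    · rw [add_zero, ← hy]
      tauto
  rcases lt_or_ge x (-(N : ℤ)) with h | h
  · exact hleft x h
  · exact Int.leInduction (motive := fun y _ => y ∈ A ↔ Odd (countLE (flips A) y))
      (hleft (-(N : ℤ) - 1) (by omega)) (fun y _ ih => hstep y ih) x (by omega)

lemma even_card_flips (A : Finset ℤ) : Even (flips A).card := by
  obtain ⟨N, hN⟩ := exists_subset_Icc A
  have hN' : (N : ℤ) + 1 ∉ A := fun h => by have := Finset.mem_Icc.mp (hN h); omega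
  rw [mem_iff_odd_countLE_flips, Nat.not_odd_iff_even, countLE, Finset.filter_true_of_mem] at hN'
  · exact hN'
  · exact fun p hp => (Finset.mem_Icc.mp (flips_subset_Icc hN hp)).2

end

section

variable {A B S γ γ' η : Finset ℤ} {P : Finset (Finset ℤ)} {x y p q : ℤ} {μ t : ℕ}

/-! ### Contours -/

/-- The diameter scales of contours; `μ` is a parameter which governs how far apart contours are. -/
def diamScale (μ : ℕ) : ℕ → ℤ
  | 0 => 1
  | t + 1 => 2 ^ (t + μ + 3) * diamScale μ t

/-- The distance required between contours the smaller of which has diameter scale `t`. -/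
def gapScale (μ t : ℕ) : ℤ := 2 ^ (t + μ) * diamScale μ t

lemma diamScale_pos (μ t : ℕ) : 0 < diamScale μ t := by
  induction t with
  | zero => simp [diamScale]
  | succ t ih => rw [diamScale]; positivity

lemma gapScale_pos (μ t : ℕ) : 0 < gapScale μ t :=
  mul_pos (by positivity) (diamScale_pos μ t)

lemma diamScale_succ (μ t : ℕ) : diamScale μ (t + 1) = 8 * gapScale μ t := by
  rw [diamScale, gapScale]
  ring

lemma diamScale_le_gapScale (μ t : ℕ) : diamScale μ t ≤ gapScale μ t :=
  le_mul_of_one_le_left (diamScale_pos μ t).le (one_le_pow₀ (by norm_num))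

lemma diamScale_mono (μ : ℕ) : Monotone (diamScale μ) :=
  monotone_nat_of_le_succ fun t => by
    have := diamScale_le_gapScale μ t
    have := gapScale_pos μ t
    rw [diamScale_succ]
    omega

lemma eight_mul_gapScale_le_diamScale {s : ℕ} (h : s < t) : 8 * gapScale μ s ≤ diamScale μ t :=
  (diamScale_succ μ s).ge.trans (diamScale_mono μ h)

lemma gapScale_mono (μ : ℕ) : Monotone (gapScale μ) :=
  monotone_nat_of_le_succ fun t => by
    have := eight_mul_gapScale_le_diamScale (μ := μ) (lt_add_one t)
    have := diamScale_le_gapScale μ (t + 1)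
    have := gapScale_pos μ t
    omega

lemma lt_diamScale (μ t : ℕ) : (t : ℤ) < diamScale μ t := by
  induction t with
  | zero => simp [diamScale]
  | succ t ih =>
    have := diamScale_le_gapScale μ t
    rw [diamScale_succ]
    push_cast
    omega

/-- The index of the smallest diameter scale bounding the diameter of `γ`. -/
def level (μ : ℕ) (γ : Finset ℤ) : ℕ := sInf {t | ∀ p ∈ γ, ∀ q ∈ γ, q - p ≤ diamScale μ t}

lemma level_le_iff : level μ γ ≤ t ↔ ∀ p ∈ γ, ∀ q ∈ γ, q - p ≤ diamScale μ t := by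
  have hne : {t | ∀ p ∈ γ, ∀ q ∈ γ, q - p ≤ diamScale μ t}.Nonempty := by
    obtain ⟨N, hN⟩ := exists_subset_Icc γ
    refine ⟨2 * N, fun p hp q hq => ?_⟩
    have := Finset.mem_Icc.mp (hN hp)
    have := Finset.mem_Icc.mp (hN hq)
    have := lt_diamScale μ (2 * N)
    push_cast at this
    omega
  exact ⟨fun h p hp q hq => (Nat.sInf_mem hne p hp q hq).trans (diamScale_mono μ h),
    fun h => Nat.sInf_le h⟩

lemma sub_le_diamScale_level (μ : ℕ) (hp : p ∈ γ) (hq : q ∈ γ) :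
    q - p ≤ diamScale μ (level μ γ) :=
  level_le_iff.mp le_rfl p hp q hq

lemma level_mono (μ : ℕ) : Monotone (level μ) := fun _ _ h =>
  level_le_iff.mpr fun _ hp _ hq => sub_le_diamScale_level μ (h hp) (h hq)

/-- The contours are far apart on the scale of the smaller one. -/
def Separated (μ : ℕ) (γ γ' : Finset ℤ) : Prop :=
  ∀ p ∈ γ, ∀ q ∈ γ', gapScale μ (min (level μ γ) (level μ γ')) ≤ |p - q|

lemma Separated.symm (h : Separated μ γ γ') : Separated μ γ' γ := by
  intro p hp q hq
  rw [min_comm, abs_sub_comm]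
  exact h q hq p hp

lemma Separated.mono_left (h : Separated μ γ γ') (hB : B ⊆ γ) : Separated μ B γ' :=
  fun p hp q hq =>
    (gapScale_mono μ (min_le_min_right _ (level_mono μ hB))).trans (h p (hB hp) q hq)

lemma Separated.disjoint (h : Separated μ γ γ') : Disjoint γ γ' := by
  refine Finset.disjoint_left.mpr fun p hp hp' => ?_
  have := h p hp p hp'
  rw [sub_self, abs_zero] at this
  exact (gapScale_pos μ _).not_ge this

/-- `P` decomposes the set `S` of flip points into mutually separated even contours. -/
structure IsContourPartition (μ : ℕ) (S : Finset ℤ) (P : Finset (Finset ℤ)) : Prop where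
  nonempty : ∀ γ ∈ P, γ.Nonempty
  even : ∀ γ ∈ P, Even γ.card
  biUnion_eq : P.biUnion id = S
  separated : (P : Set (Finset ℤ)).Pairwise (Separated μ)

/-- No proper even part of the contour `γ` can be split off. -/
def Unsplittable (μ : ℕ) (γ : Finset ℤ) : Prop :=
  ∀ B ⊆ γ, B.Nonempty → B ≠ γ → Even B.card →
    ∃ p ∈ B, ∃ q ∈ γ \ B, |p - q| < gapScale μ (level μ B)

namespace IsContourPartition

lemma subset (hP : IsContourPartition μ S P) (hγ : γ ∈ P) : γ ⊆ S := by
  rw [← hP.biUnion_eq]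
  exact Finset.subset_biUnion_of_mem id hγ

lemma separated_of_mem_erase (hP : IsContourPartition μ S P) (hγ : γ ∈ P) (hη : η ∈ P.erase γ) :
    Separated μ γ η :=
  hP.separated hγ (Finset.mem_of_mem_erase hη) (Finset.ne_of_mem_erase hη).symm

lemma split (hP : IsContourPartition μ S P) (hγ : γ ∈ P) (hB : B ⊂ γ) (hne : B.Nonempty)
    (heven : Even B.card) (hsep : Separated μ B (γ \ B)) :
    IsContourPartition μ S (insert B (insert (γ \ B) (P.erase γ))) where
  nonempty := by
    simp only [Finset.forall_mem_insert]
    exact ⟨hne, Finset.sdiff_nonempty.mpr hB.2,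
      fun η hη => hP.nonempty η (Finset.mem_of_mem_erase hη)⟩
  even := by
    have hdiff : Even (γ \ B).card := by
      rw [Finset.card_sdiff_of_subset hB.1, Nat.even_sub (Finset.card_le_card hB.1)]
      simp [heven, hP.even γ hγ]
    simp only [Finset.forall_mem_insert]
    exact ⟨heven, hdiff, fun η hη => hP.even η (Finset.mem_of_mem_erase hη)⟩
  biUnion_eq := by
    rw [Finset.biUnion_insert, Finset.biUnion_insert, ← Finset.union_assoc, id, id,
      Finset.union_sdiff_of_subset hB.1, ← hP.biUnion_eq]
    nth_rw 2 [← Finset.insert_erase hγ]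
    rw [Finset.biUnion_insert, id]
  separated := by
    have : Std.Symm (Separated μ) := ⟨fun _ _ h => h.symm⟩
    have hrest (η : Finset ℤ) (hη : η ∈ P.erase γ) := hP.separated_of_mem_erase hγ hη
    rw [Finset.coe_insert, Finset.coe_insert, Set.pairwise_insert_of_symm,
      Set.pairwise_insert_of_symm]
    refine ⟨⟨hP.separated.mono (Finset.coe_subset.mpr (Finset.erase_subset _ _)),
      fun η hη _ => (hrest η hη).mono_left Finset.sdiff_subset⟩, fun η hη _ => ?_⟩
    rcases Set.mem_insert_iff.mp hη with rfl | hη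
    · exact hsep
    · exact (hrest η hη).mono_left hB.1

lemma card_lt_card_split (hP : IsContourPartition μ S P) (hγ : γ ∈ P) (hB : B ⊂ γ)
    (hne : B.Nonempty) : P.card < (insert B (insert (γ \ B) (P.erase γ))).card := by
  have hnotMem (C : Finset ℤ) (hC : C ⊆ γ) (hCne : C.Nonempty) : C ∉ P.erase γ := fun h => by
    obtain ⟨p, hp⟩ := hCne
    exact Finset.disjoint_left.mp (hP.separated_of_mem_erase hγ h).disjoint (hC hp) hp
  have hB_ne : B ≠ γ \ B := fun h => by
    obtain ⟨p, hp⟩ := hne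
    exact (Finset.mem_sdiff.mp (h ▸ hp)).2 hp
  have hB_notMem : B ∉ insert (γ \ B) (P.erase γ) := by
    simpa [hB_ne] using hnotMem B hB.1 hne
  rw [Finset.card_insert_of_notMem hB_notMem, Finset.card_insert_of_notMem
    (hnotMem _ Finset.sdiff_subset (Finset.sdiff_nonempty.mpr hB.2)), Finset.card_erase_of_mem hγ]
  omega

lemma card_filter (hP : IsContourPartition μ S P) (f : ℤ → Prop) [DecidablePred f] :
    (S.filter f).card = ∑ γ ∈ P, (γ.filter f).card := by
  rw [← hP.biUnion_eq, Finset.filter_biUnion, Finset.card_biUnion]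
  · rfl
  · exact fun γ hγ γ' hγ' h => Finset.disjoint_filter_filter (hP.separated hγ hγ' h).disjoint

end IsContourPartition

lemma exists_isContourPartition (hS : Even S.card) : ∃ P, IsContourPartition μ S P := by
  rcases S.eq_empty_or_nonempty with rfl | hne
  · exact ⟨∅, by simp, by simp, by simp, by simp⟩
  · exact ⟨{S}, by simpa using hne, by simpa using hS, by simp, by simp⟩

lemma exists_isContourPartition_unsplittable (μ : ℕ) (hS : Even S.card) :
    ∃ P, IsContourPartition μ S P ∧ ∀ γ ∈ P, Unsplittable μ γ := by
  classical
  have hmem {P} (hP : IsContourPartition μ S P) :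
      P ∈ S.powerset.powerset.filter (IsContourPartition μ S) := by
    simp only [Finset.mem_filter, Finset.mem_powerset]
    exact ⟨fun γ hγ => Finset.mem_powerset.mpr (hP.subset hγ), hP⟩
  obtain ⟨P₀, hP₀⟩ := exists_isContourPartition (μ := μ) hS
  obtain ⟨P, hP, hmax⟩ := Finset.exists_max_image _ Finset.card ⟨P₀, hmem hP₀⟩
  replace hP := (Finset.mem_filter.mp hP).2
  refine ⟨P, hP, fun γ hγ B hB hne hBγ heven => ?_⟩
  by_contra! hfar
  have hsep : Separated μ B (γ \ B) := fun p hp q hq =>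
    (gapScale_mono μ (min_le_left _ _)).trans (hfar p hp q hq)
  have hlt := hB.ssubset_of_ne hBγ
  exact (hP.card_lt_card_split hγ hlt hne).not_ge (hmax _ (hmem (hP.split hγ hlt hne heven hsep)))

lemma exists_odd_of_odd_sum {ι : Type*} {s : Finset ι} {f : ι → ℕ} (h : Odd (∑ i ∈ s, f i)) :
    ∃ i ∈ s, Odd (f i) := by
  by_contra! heven
  exact Nat.not_even_iff_odd.mpr h
    (Finset.even_sum f fun i hi => Nat.not_odd_iff_even.mp (heven i hi))

lemma IsContourPartition.exists_odd_countLE (hP : IsContourPartition μ S P)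
    (h : Odd (countLE S x)) : ∃ γ ∈ P, Odd (countLE γ x) := by
  rw [countLE, hP.card_filter] at h
  exact exists_odd_of_odd_sum h

lemma IsContourPartition.exists_odd_countIoc (hP : IsContourPartition μ (flips A) P) (hγ : γ ∈ P)
    (hxy : x ≤ y) (hI : Separates (enclosed γ) x y)
    (hB : Separates (symmDiff A (enclosed γ)) x y) : ∃ η ∈ P.erase γ, Odd (countIoc η x y) := by
  have hA : x ∈ A ↔ y ∈ A := by
    simp only [Separates, Finset.mem_symmDiff] at hI hB
    tauto
  rw [mem_iff_odd_countLE_flips A x, mem_iff_odd_countLE_flips A y,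
    countLE_add_countIoc (flips A) hxy] at hA
  rw [separates_enclosed_iff (hP.even γ hγ) hxy] at hI
  have hsum : countIoc (flips A) x y = countIoc γ x y + ∑ η ∈ P.erase γ, countIoc η x y := by
    rw [Finset.add_sum_erase P (countIoc · x y) hγ]
    exact hP.card_filter _
  have heven : Even (countIoc (flips A) x y) := by grind
  refine exists_odd_of_odd_sum ?_
  grind

lemma exists_hull_eq_Ico (hγ : γ.Nonempty) :
    ∃ a ∈ γ, ∃ b ∈ γ, (∀ p ∈ γ, a ≤ p ∧ p ≤ b) ∧ hull γ = Finset.Ico a b := by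
  refine ⟨γ.min' hγ, γ.min'_mem hγ, γ.max' hγ, γ.max'_mem hγ,
    fun p hp => ⟨γ.min'_le p hp, γ.le_max' p hp⟩, ?_⟩
  ext x
  rw [mem_hull, Finset.mem_Ico]
  constructor
  · rintro ⟨p, hp, q, hq, hpx, hxq⟩
    exact ⟨(γ.min'_le p hp).trans hpx, hxq.trans_le (γ.le_max' q hq)⟩
  · rintro ⟨hax, hxb⟩
    exact ⟨_, γ.min'_mem hγ, _, γ.max'_mem hγ, hax, hxb⟩

lemma card_hull_le (μ : ℕ) (γ : Finset ℤ) : ((hull γ).card : ℤ) ≤ diamScale μ (level μ γ) := by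
  rcases γ.eq_empty_or_nonempty with rfl | hγ
  · simpa [hull] using (diamScale_pos μ _).le
  · obtain ⟨a, ha, b, hb, hab, hhull⟩ := exists_hull_eq_Ico hγ
    have := sub_le_diamScale_level μ ha hb
    have := (hab a ha).2
    rw [hhull, Int.card_Ico]
    omega

end

section

variable {J : ℤ → ℝ≥0∞} {α : ℝ} {A S γ η : Finset ℤ} {P : Finset (Finset ℤ)} {x y p a b : ℤ}
  {μ : ℕ}

/-! ### The interaction between a contour and the rest of the configuration -/

lemma mul_sum_le_sum {X : Type*} {A B : Finset X} {F : X → ℝ≥0∞} {m : ℕ}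
    (hcard : m * A.card ≤ B.card) (hF : ∀ x ∈ A, ∀ z ∈ B, F x ≤ F z) :
    m * ∑ x ∈ A, F x ≤ ∑ z ∈ B, F z := by
  calc m * ∑ x ∈ A, F x ≤ m * (A.card • B.inf F) := by
        gcongr
        exact Finset.sum_le_card_nsmul A F _ fun x hx => Finset.le_inf (hF x hx)
    _ = (m * A.card : ℕ) • B.inf F := by rw [nsmul_eq_mul, nsmul_eq_mul, Nat.cast_mul, mul_assoc]
    _ ≤ B.card • B.inf F := by gcongr
    _ ≤ ∑ z ∈ B, F z := Finset.card_nsmul_le_sum B F _ fun z hz => Finset.inf_le hz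

lemma sum_sum_le_tsum_of_windows {ι X : Type*} {Q : Finset ι} {A W : ι → Finset X}
    {F : X → ℝ≥0∞} {m : ℕ} (hcard : ∀ i ∈ Q, m * (A i).card ≤ (W i).card)
    (hF : ∀ i ∈ Q, ∀ x ∈ A i, ∀ z ∈ W i, F x ≤ F z)
    (hdisj : (Q : Set ι).PairwiseDisjoint W) :
    m * ∑ i ∈ Q, ∑ x ∈ A i, F x ≤ ∑' z, F z := by
  classical
  rw [Finset.mul_sum]
  calc ∑ i ∈ Q, m * ∑ x ∈ A i, F x ≤ ∑ i ∈ Q, ∑ z ∈ W i, F z :=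
        Finset.sum_le_sum fun i hi => mul_sum_le_sum (hcard i hi) (hF i hi)
    _ = ∑ z ∈ Q.biUnion W, F z := (Finset.sum_biUnion hdisj).symm
    _ ≤ ∑' z, F z := ENNReal.sum_le_tsum _

lemma sum_inv_two_pow_add_le (s : Finset ℕ) (μ : ℕ) :
    ∑ t ∈ s, ((2 : ℝ≥0∞) ^ (t + μ))⁻¹ ≤ 2 * (2 ^ μ)⁻¹ := by
  calc ∑ t ∈ s, ((2 : ℝ≥0∞) ^ (t + μ))⁻¹ = (∑ t ∈ s, (2⁻¹ : ℝ≥0∞) ^ t) * (2 ^ μ)⁻¹ := by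
        rw [Finset.sum_mul]
        refine Finset.sum_congr rfl fun t _ => ?_
        rw [pow_add, ENNReal.mul_inv (by simp) (by simp), ENNReal.inv_pow]
    _ ≤ _ := by
        gcongr
        refine (ENNReal.sum_le_tsum _).trans ?_
        rw [ENNReal.tsum_geometric, ENNReal.one_sub_inv_two, inv_inv]

lemma sum_sum_le_of_level_windows {ι X : Type*} {Q : Finset ι} (lev : ι → ℕ)
    {A W : ι → Finset X} {F : X → ℝ≥0∞}
    (hcard : ∀ i ∈ Q, 2 ^ (lev i + μ) * (A i).card ≤ (W i).card)
    (hF : ∀ i ∈ Q, ∀ x ∈ A i, ∀ z ∈ W i, F x ≤ F z)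
    (hdisj : ∀ i ∈ Q, ∀ j ∈ Q, i ≠ j → lev i = lev j → Disjoint (W i) (W j)) :
    ∑ i ∈ Q, ∑ x ∈ A i, F x ≤ 2 * (2 ^ μ)⁻¹ * ∑' z, F z := by
  have hlevel (t : ℕ) : ∑ i ∈ Q with lev i = t, ∑ x ∈ A i, F x ≤
      ((2 : ℝ≥0∞) ^ (t + μ))⁻¹ * ∑' z, F z := by
    have h := sum_sum_le_tsum_of_windows (Q := Q.filter (lev · = t)) (A := A) (W := W) (F := F)
      (m := 2 ^ (t + μ)) (by grind) (by grind) fun i hi j hj hij => by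
        simp only [Finset.coe_filter, Set.mem_ofPred_eq] at hi hj
        exact hdisj i hi.1 j hj.1 hij (hi.2.trans hj.2.symm)
    rw [← ENNReal.div_eq_inv_mul, ENNReal.le_div_iff_mul_le (by simp) (by simp), mul_comm]
    simpa using h
  rw [← Finset.sum_fiberwise_of_maps_to (t := Q.image lev) (g := lev)
    fun i hi => Finset.mem_image_of_mem lev hi]
  refine (Finset.sum_le_sum fun t _ => hlevel t).trans ?_
  rw [← Finset.sum_mul]
  gcongr
  exact sum_inv_two_pow_add_le _ μ

lemma two_pow_mul_card_hull_le (μ : ℕ) (γ : Finset ℤ) :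
    2 ^ (level μ γ + μ) * ((hull γ).card : ℤ) ≤ gapScale μ (level μ γ) :=
  mul_le_mul_of_nonneg_left (card_hull_le μ γ) (by positivity)

lemma le_or_ge_of_separated (hsep : Separated μ γ η) (hlev : level μ η ≤ level μ γ)
    (ha : a ∈ η) (hb : b ∈ η) (hp : p ∈ γ) :
    p ≤ a - gapScale μ (level μ η) ∨ b + gapScale μ (level μ η) ≤ p := by
  have hpa := hsep p hp a ha
  have hpb := hsep p hp b hb
  rw [min_eq_right hlev] at hpa hpb
  have := sub_le_diamScale_level μ ha hb
  have := diamScale_le_gapScale μ (level μ η)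
  have := gapScale_pos μ (level μ η)
  grind

lemma mem_enclosed_congr (hγ : Even γ.card) (hxy : x ≤ y) (h : ∀ p ∈ γ, p ≤ x ∨ y < p) :
    x ∈ enclosed γ ↔ y ∈ enclosed γ := by
  by_contra hsep
  obtain ⟨p, hp, hxp, hpy⟩ := exists_mem_of_odd_countIoc ((separates_enclosed_iff hγ hxy).mp hsep)
  have := h p hp
  omega

lemma rightCut_le_rightCut (hJ : IsCoupling J) (hγ : Even γ.card) (hxy : x ≤ y)
    (h : ∀ p ∈ γ, p ≤ x ∨ y < p) : rightCut J (enclosed γ) x ≤ rightCut J (enclosed γ) y := by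
  refine ENNReal.tsum_le_tsum fun z => ?_
  simp only [Separates, ← mem_enclosed_congr hγ hxy h]
  split_ifs with hsep
  · exact zero_le
  rcases le_or_gt z x with hz | hz
  · simp [hJ.zero_of_nonpos (z - x) (by omega)]
  obtain ⟨p, hp, hxp, hpz⟩ :=
    exists_mem_of_odd_countIoc ((separates_enclosed_iff hγ hz.le).mp hsep)
  have := h p hp
  exact hJ.antitoneOn (show 0 < z - y by omega) (show 0 < z - x by omega) (by omega)

lemma leftCut_le_leftCut (hJ : IsCoupling J) (hγ : Even γ.card) (hxy : x ≤ y)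
    (h : ∀ p ∈ γ, p ≤ x ∨ y < p) : leftCut J (enclosed γ) y ≤ leftCut J (enclosed γ) x := by
  refine ENNReal.tsum_le_tsum fun z => ?_
  simp only [Separates, mem_enclosed_congr hγ hxy h]
  split_ifs with hsep
  · exact zero_le
  rcases le_or_gt y z with hz | hz
  · simp [hJ.zero_of_nonpos (y - z) (by omega)]
  obtain ⟨p, hp, hzp, hpy⟩ :=
    exists_mem_of_odd_countIoc ((separates_enclosed_iff hγ hz.le).mp hsep)
  have := h p hp
  exact hJ.antitoneOn (show 0 < x - z by omega) (show 0 < y - z by omega) (by omega)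

/-- The contours of `P` other than `γ` which live on a smaller scale than `γ`. -/
def smallerContours (μ : ℕ) (P : Finset (Finset ℤ)) (γ : Finset ℤ) : Finset (Finset ℤ) :=
  (P.erase γ).filter (level μ · < level μ γ)

lemma mem_smallerContours : η ∈ smallerContours μ P γ ↔ η ∈ P.erase γ ∧ level μ η < level μ γ :=
  Finset.mem_filter

lemma tsum_tsum_ite_mem_ite_separates_left (J : ℤ → ℝ≥0∞) (U I : Finset ℤ) :
    ∑' x, ∑' y, (if x ∈ U then (if Separates I x y then J (y - x) else 0) else 0) =
      ∑ x ∈ U, rightCut J I x :=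
  tsum_tsum_ite_mem_left U fun x y => if Separates I x y then J (y - x) else 0

lemma tsum_tsum_ite_mem_ite_separates_right (J : ℤ → ℝ≥0∞) (U I : Finset ℤ) :
    ∑' x, ∑' y, (if y ∈ U then (if Separates I x y then J (y - x) else 0) else 0) =
      ∑ y ∈ U, leftCut J I y :=
  tsum_tsum_ite_mem_right U fun x y => if Separates I x y then J (y - x) else 0

lemma tsum_tsum_ite_mem_ite_lt_left (J : ℤ → ℝ≥0∞) (I : Finset ℤ) (k : ℤ) :
    ∑' x, ∑' y, (if x ∈ I then (if k < y - x then J (y - x) else 0) else 0) =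
      I.card * tailSum J k := by
  simp only [tsum_tsum_ite_mem_left I fun x y => if k < y - x then J (y - x) else 0,
    tsum_ite_lt_sub_right, Finset.sum_const, nsmul_eq_mul]

lemma tsum_tsum_ite_mem_ite_lt_right (J : ℤ → ℝ≥0∞) (I : Finset ℤ) (k : ℤ) :
    ∑' x, ∑' y, (if y ∈ I then (if k < y - x then J (y - x) else 0) else 0) =
      I.card * tailSum J k := by
  simp only [tsum_tsum_ite_mem_right I fun x y => if k < y - x then J (y - x) else 0,
    tsum_ite_lt_sub_left, Finset.sum_const, nsmul_eq_mul]

lemma sum_biUnion_le_sum_sum {ι X : Type*} [DecidableEq X] (Q : Finset ι) (A : ι → Finset X)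
    (F : X → ℝ≥0∞) : ∑ x ∈ Q.biUnion A, F x ≤ ∑ i ∈ Q, ∑ x ∈ A i, F x := by
  classical
  induction Q using Finset.induction_on with
  | empty => simp
  | insert i Q hi ih =>
    rw [Finset.biUnion_insert, Finset.sum_insert hi]
    refine le_trans ?_ (add_le_add_right ih _)
    rw [← Finset.sum_union_inter]
    exact le_self_add

namespace IsContourPartition

lemma gapScale_le_abs_sub (hP : IsContourPartition μ S P) {η' : Finset ℤ}
    (hη : η ∈ smallerContours μ P γ) (hη' : η' ∈ smallerContours μ P γ) (hne : η ≠ η')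
    (hlev : level μ η = level μ η') (ha : a ∈ η) (hb : b ∈ η') :
    gapScale μ (level μ η) ≤ |a - b| := by
  have h := hP.separated (Finset.mem_of_mem_erase (mem_smallerContours.mp hη).1)
    (Finset.mem_of_mem_erase (mem_smallerContours.mp hη').1) hne a ha b hb
  rwa [← hlev, min_self] at h

lemma exists_hull_eq_Ico_smallerContours (hP : IsContourPartition μ S P) (hγ : γ ∈ P) :
    ∃ lo hi : Finset ℤ → ℤ, ∀ η ∈ smallerContours μ P γ, lo η ∈ η ∧ hi η ∈ η ∧
      hull η = Finset.Ico (lo η) (hi η) ∧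
      ∀ p ∈ γ, p ≤ lo η - gapScale μ (level μ η) ∨ hi η + gapScale μ (level μ η) ≤ p := by
  have h : ∀ η ∈ smallerContours μ P γ, ∃ a b, a ∈ η ∧ b ∈ η ∧ hull η = Finset.Ico a b ∧
      ∀ p ∈ γ, p ≤ a - gapScale μ (level μ η) ∨ b + gapScale μ (level μ η) ≤ p := by
    intro η hη
    obtain ⟨hη, hlev⟩ := mem_smallerContours.mp hη
    obtain ⟨a, ha, b, hb, -, hhull⟩ :=
      exists_hull_eq_Ico (hP.nonempty η (Finset.mem_of_mem_erase hη))
    exact ⟨a, b, ha, hb, hhull, fun p hp =>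
      le_or_ge_of_separated (hP.separated_of_mem_erase hγ hη) hlev.le ha hb hp⟩
  choose! lo hi h using h
  exact ⟨lo, hi, h⟩

lemma sum_rightCut_hull_le (hJ : IsCoupling J) (hP : IsContourPartition μ S P) (hγ : γ ∈ P) :
    ∑ η ∈ smallerContours μ P γ, ∑ x ∈ hull η, rightCut J (enclosed γ) x ≤
      2 * (2 ^ μ)⁻¹ * cut J (enclosed γ) := by
  obtain ⟨lo, hi, h⟩ := hP.exists_hull_eq_Ico_smallerContours hγ
  refine sum_sum_le_of_level_windows (level μ)
    (W := fun η => Finset.Ico (hi η) (hi η + gapScale μ (level μ η))) (fun η _ => ?_)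
    (fun η hη x hx z hz => ?_) fun η hη η' hη' hne hlev => ?_
  · have := two_pow_mul_card_hull_le μ η
    rw [Int.card_Ico]
    zify
    omega
  · obtain ⟨-, -, hhull, hfar⟩ := h η hη
    rw [hhull, Finset.mem_Ico] at hx
    rw [Finset.mem_Ico] at hz
    have := gapScale_pos μ (level μ η)
    refine rightCut_le_rightCut hJ (hP.even γ hγ) (by omega) fun p hp => ?_
    have := hfar p hp
    omega
  · have := hP.gapScale_le_abs_sub hη hη' hne hlev (h η hη).2.1 (h η' hη').2.1
    rw [← hlev, Finset.disjoint_left]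
    intro z hz hz'
    rw [Finset.mem_Ico] at hz hz'
    rcases abs_cases (hi η - hi η') with ⟨h, _⟩ | ⟨h, _⟩ <;> omega

lemma sum_leftCut_hull_le (hJ : IsCoupling J) (hP : IsContourPartition μ S P) (hγ : γ ∈ P) :
    ∑ η ∈ smallerContours μ P γ, ∑ x ∈ hull η, leftCut J (enclosed γ) x ≤
      2 * (2 ^ μ)⁻¹ * cut J (enclosed γ) := by
  obtain ⟨lo, hi, h⟩ := hP.exists_hull_eq_Ico_smallerContours hγ
  rw [← tsum_leftCut]
  refine sum_sum_le_of_level_windows (level μ)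
    (W := fun η => Finset.Ico (lo η - gapScale μ (level μ η)) (lo η)) (fun η _ => ?_)
    (fun η hη x hx z hz => ?_) fun η hη η' hη' hne hlev => ?_
  · have := two_pow_mul_card_hull_le μ η
    rw [Int.card_Ico]
    zify
    omega
  · obtain ⟨-, -, hhull, hfar⟩ := h η hη
    rw [hhull, Finset.mem_Ico] at hx
    rw [Finset.mem_Ico] at hz
    have := gapScale_pos μ (level μ η)
    refine leftCut_le_leftCut hJ (hP.even γ hγ) (by omega) fun p hp => ?_
    have := hfar p hp
    omega
  · have := hP.gapScale_le_abs_sub hη hη' hne hlev (h η hη).1 (h η' hη').1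
    rw [← hlev, Finset.disjoint_left]
    intro z hz hz'
    rw [Finset.mem_Ico] at hz hz'
    rcases abs_cases (lo η - lo η') with ⟨h, _⟩ | ⟨h, _⟩ <;> omega

lemma lt_sub_or_mem_biUnion_hull (hP : IsContourPartition μ (flips A) P) (hγ : γ ∈ P)
    (hxy : x ≤ y) (hI : Separates (enclosed γ) x y)
    (hB : Separates (symmDiff A (enclosed γ)) x y) :
    gapScale μ (level μ γ) < y - x ∨
      x ∈ (smallerContours μ P γ).biUnion hull ∨ y ∈ (smallerContours μ P γ).biUnion hull := by
  obtain ⟨η, hη, hodd⟩ := hP.exists_odd_countIoc hγ hxy hI hB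
  rcases lt_or_ge (level μ η) (level μ γ) with hlev | hlev
  · right
    simp only [Finset.mem_biUnion]
    have hη' : η ∈ smallerContours μ P γ := mem_smallerContours.mpr ⟨hη, hlev⟩
    exact (mem_hull_or_mem_hull (hP.even η (Finset.mem_of_mem_erase hη)) hodd).imp
      (⟨η, hη', ·⟩) (⟨η, hη', ·⟩)
  · left
    obtain ⟨p, hp, hxp, hpy⟩ :=
      exists_mem_of_odd_countIoc ((separates_enclosed_iff (hP.even γ hγ) hxy).mp hI)
    obtain ⟨q, hq, hxq, hqy⟩ := exists_mem_of_odd_countIoc hodd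
    have hfar := hP.separated_of_mem_erase hγ hη p hp q hq
    rw [min_eq_left hlev] at hfar
    rcases abs_cases (p - q) with ⟨h, _⟩ | ⟨h, _⟩ <;> omega

lemma crossCut_le_add_add_add (hJ : IsCoupling J) (hP : IsContourPartition μ (flips A) P)
    (hγ : γ ∈ P) :
    crossCut J (symmDiff A (enclosed γ)) (enclosed γ) ≤
      (enclosed γ).card * tailSum J (gapScale μ (level μ γ)) +
        (enclosed γ).card * tailSum J (gapScale μ (level μ γ)) +
        ∑ x ∈ (smallerContours μ P γ).biUnion hull, rightCut J (enclosed γ) x +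
        ∑ x ∈ (smallerContours μ P γ).biUnion hull, leftCut J (enclosed γ) x := by
  rw [← tsum_tsum_ite_mem_ite_separates_left, ← tsum_tsum_ite_mem_ite_separates_right]
  nth_rw 1 [← tsum_tsum_ite_mem_ite_lt_left]
  rw [← tsum_tsum_ite_mem_ite_lt_right]
  simp only [← ENNReal.tsum_add]
  refine ENNReal.tsum_le_tsum fun x => ENNReal.tsum_le_tsum fun y => ?_
  rcases le_or_gt y x with hyx | hxy
  · simp [hJ.zero_of_nonpos (y - x) (by omega)]
  by_cases hsep : Separates (enclosed γ) x y ∧ Separates (symmDiff A (enclosed γ)) x y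
  · have hmem : x ∈ enclosed γ ∨ y ∈ enclosed γ := by
      have := hsep.1
      tauto
    rw [if_pos hsep, if_pos hsep.1]
    rcases hP.lt_sub_or_mem_biUnion_hull hγ hxy.le hsep.1 hsep.2 with hlong | hU | hU
    · rw [if_pos hlong]
      rcases hmem with h | h <;> simp only [if_pos h, add_assoc, le_self_add, le_add_left]
    · simp only [if_pos hU, add_assoc, le_self_add, le_add_left]
    · simp only [if_pos hU, le_add_self]
  · rw [if_neg hsep]
    exact zero_le

theorem crossCut_le (hJ : IsCoupling J) (hP : IsContourPartition μ (flips A) P) (hγ : γ ∈ P) :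
    crossCut J (symmDiff A (enclosed γ)) (enclosed γ) ≤
      2 * (enclosed γ).card * tailSum J (gapScale μ (level μ γ)) +
        4 * (2 ^ μ)⁻¹ * cut J (enclosed γ) := by
  calc crossCut J (symmDiff A (enclosed γ)) (enclosed γ) ≤ _ := hP.crossCut_le_add_add_add hJ hγ
    _ ≤ (enclosed γ).card * tailSum J (gapScale μ (level μ γ)) +
        (enclosed γ).card * tailSum J (gapScale μ (level μ γ)) +
        2 * (2 ^ μ)⁻¹ * cut J (enclosed γ) + 2 * (2 ^ μ)⁻¹ * cut J (enclosed γ) := by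
      gcongr
      · exact (sum_biUnion_le_sum_sum _ _ _).trans (hP.sum_rightCut_hull_le hJ hγ)
      · exact (sum_biUnion_le_sum_sum _ _ _).trans (hP.sum_leftCut_hull_le hJ hγ)
    _ = _ := by ring

end IsContourPartition

lemma two_card_mul_tailSum_le (hα : 1 < α) (μ : ℕ) (γ : Finset ℤ) :
    2 * (enclosed γ).card * tailSum (kern α) (gapScale μ (level μ γ)) ≤
      ENNReal.ofReal (((2 ^ μ : ℕ) : ℝ) ^ (1 - α)) * cut (kern α) (enclosed γ) := by
  rcases (enclosed γ).eq_empty_or_nonempty with h | h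
  · simp [h]
  have hscale : ((2 ^ μ : ℕ) : ℤ) * (enclosed γ).card ≤ gapScale μ (level μ γ) := by
    refine le_trans ?_ (two_pow_mul_card_hull_le μ γ)
    push_cast
    gcongr
    · norm_num
    · exact Nat.le_add_left _ _
    · exact Finset.filter_subset _ _
  have hpos : (0 : ℤ) < (enclosed γ).card := by exact_mod_cast h.card_pos
  calc 2 * (enclosed γ).card * tailSum (kern α) (gapScale μ (level μ γ))
      ≤ 2 * (enclosed γ).card * (ENNReal.ofReal (((2 ^ μ : ℕ) : ℝ) ^ (1 - α)) *
          tailSum (kern α) ((enclosed γ).card - 1)) := by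
        gcongr
        exact (tailSum_antitone _ hscale).trans (tailSum_mul_le (by linarith) (2 ^ μ) hpos)
    _ = ENNReal.ofReal (((2 ^ μ : ℕ) : ℝ) ^ (1 - α)) *
          (2 * (enclosed γ).card * tailSum (kern α) ((enclosed γ).card - 1)) := by ring
    _ ≤ _ := by
        gcongr
        exact card_mul_tailSum_le_cut (isCoupling_kern hα) h

lemma IsContourPartition.crossCut_kern_le (hα : 1 < α) (hP : IsContourPartition μ (flips A) P)
    (hγ : γ ∈ P) :
    crossCut (kern α) (symmDiff A (enclosed γ)) (enclosed γ) ≤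
      (ENNReal.ofReal (((2 ^ μ : ℕ) : ℝ) ^ (1 - α)) + 4 * (2 ^ μ)⁻¹) *
        cut (kern α) (enclosed γ) := by
  rw [add_mul]
  exact (hP.crossCut_le (isCoupling_kern hα) hγ).trans <|
    add_le_add (two_card_mul_tailSum_le hα μ γ) le_rfl

end

section

variable {α : ℝ} {γ : Finset ℤ} {x y p q s d g u : ℤ} {μ t : ℕ}

/-! ### Logarithmic lengths of contours -/

open Classical in
/-- The points of `S` which are related by `R` to no other point of `S`. -/
def isolated {V : Type*} (R : V → V → Prop) (S : Finset V) : Finset V :=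
  S.filter fun v => ∀ w ∈ S, R v w → w = v

lemma mem_isolated {V : Type*} {R : V → V → Prop} {S : Finset V} {v : V} :
    v ∈ isolated R S ↔ v ∈ S ∧ ∀ w ∈ S, R v w → w = v := by
  classical
  simp [isolated]

/-- The complement of a minimal dominating set is again dominating, up to isolated points. -/
lemma exists_dominating_card_le {V : Type*} {R : V → V → Prop} (hrefl : ∀ v, R v v)
    (hsymm : ∀ v w, R v w → R w v) (S : Finset V) :
    ∃ D ⊆ S, (∀ v ∈ S, ∃ w ∈ D, R v w) ∧ 2 * D.card ≤ S.card + (isolated R S).card := by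
  classical
  obtain ⟨D, hD, hmin⟩ := (S.powerset.filter fun D => ∀ v ∈ S, ∃ w ∈ D, R v w).exists_min_image
    Finset.card ⟨S, by simpa using fun v hv => ⟨v, hv, hrefl v⟩⟩
  simp only [Finset.mem_filter, Finset.mem_powerset] at hD hmin
  obtain ⟨hDS, hdom⟩ := hD
  have hcompl : ∀ v ∈ S, ∃ w ∈ S \ D ∪ isolated R S, R v w := by
    intro v hv
    by_cases hvE : v ∈ S \ D ∪ isolated R S
    · exact ⟨v, hvE, hrefl v⟩
    by_contra! hnone
    have hnbr (w) (hw : w ∈ S) (hvw : R v w) : w ∈ D := by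
      by_contra hwD
      exact hnone w (by simp [hw, hwD]) hvw
    obtain ⟨w, hw, hvw, hwv⟩ : ∃ w ∈ S, R v w ∧ w ≠ v := by
      simpa [mem_isolated, hv] using (Finset.notMem_union.mp hvE).2
    have herase : ∀ z ∈ S, ∃ z' ∈ D.erase v, R z z' := by
      intro z hz
      obtain ⟨z', hz', hzz'⟩ := hdom z hz
      by_cases hz'v : z' = v
      · by_cases hzv : z = v
        · exact ⟨w, Finset.mem_erase.mpr ⟨hwv, hnbr w hw hvw⟩, hzv ▸ hvw⟩
        · exact ⟨z, Finset.mem_erase.mpr ⟨hzv, hnbr z hz (hsymm z v (hz'v ▸ hzz'))⟩, hrefl z⟩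
      · exact ⟨z', Finset.mem_erase.mpr ⟨hz'v, hz'⟩, hzz'⟩
    have := hmin _ ⟨(Finset.erase_subset v D).trans hDS, herase⟩
    exact (Finset.card_erase_lt_of_mem (hnbr v hv (hrefl v))).not_ge this
  refine ⟨D, hDS, hdom, ?_⟩
  have := hmin _ ⟨Finset.union_subset Finset.sdiff_subset fun v hv => (mem_isolated.mp hv).1,
    hcompl⟩
  have := Finset.card_union_le (S \ D) (isolated R S)
  have := Finset.card_sdiff_add_card_eq_card hDS
  omega

/-- The sites `v` and `w` are close on the scale `t`, so that thinning may merge them. -/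
def Close (μ t : ℕ) (v w : ℤ) : Prop := |v - w| ≤ 2 * diamScale μ t + gapScale μ t

lemma exists_close_dominating_card_le (μ t : ℕ) (S : Finset ℤ) :
    ∃ D ⊆ S, (∀ v ∈ S, ∃ w ∈ D, Close μ t v w) ∧
      2 * D.card ≤ S.card + (isolated (Close μ t) S).card := by
  refine exists_dominating_card_le (fun v => ?_) (fun v w h => ?_) S
  · have := diamScale_pos μ t
    have := gapScale_pos μ t
    rw [Close, sub_self, abs_zero]
    omega
  · rwa [Close, abs_sub_comm]

/-- Successive thinnings of `γ` along the diameter scales. -/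
def thinSeq (μ : ℕ) (γ : Finset ℤ) : ℕ → Finset ℤ
  | 0 => γ
  | t + 1 => (exists_close_dominating_card_le μ t (thinSeq μ γ t)).choose

lemma thinSeq_succ_spec (μ : ℕ) (γ : Finset ℤ) (t : ℕ) :
    thinSeq μ γ (t + 1) ⊆ thinSeq μ γ t ∧
      (∀ v ∈ thinSeq μ γ t, ∃ w ∈ thinSeq μ γ (t + 1), Close μ t v w) ∧
      2 * (thinSeq μ γ (t + 1)).card ≤
        (thinSeq μ γ t).card + (isolated (Close μ t) (thinSeq μ γ t)).card :=
  (exists_close_dominating_card_le μ t (thinSeq μ γ t)).choose_spec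

lemma thinSeq_subset (μ : ℕ) (γ : Finset ℤ) (t : ℕ) : thinSeq μ γ t ⊆ γ := by
  induction t with
  | zero => exact subset_rfl
  | succ t ih => exact (thinSeq_succ_spec μ γ t).1.trans ih

lemma exists_mem_thinSeq (μ t : ℕ) (hp : p ∈ γ) :
    ∃ s ∈ thinSeq μ γ t, 2 * |p - s| ≤ diamScale μ t := by
  induction t with
  | zero => exact ⟨p, hp, by simp [diamScale]⟩
  | succ t ih =>
    obtain ⟨s, hs, hps⟩ := ih
    obtain ⟨s', hs', hss'⟩ := (thinSeq_succ_spec μ γ t).2.1 s hs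
    refine ⟨s', hs', ?_⟩
    have := diamScale_le_gapScale μ t
    have := gapScale_pos μ t
    have := abs_sub_le p s s'
    rw [diamScale_succ]
    unfold Close at hss'
    omega

/-- The isolated points of the thinned contour, when there are several points left. -/
def lonely (μ : ℕ) (γ : Finset ℤ) (t : ℕ) : Finset ℤ :=
  if 2 ≤ (thinSeq μ γ t).card then isolated (Close μ t) (thinSeq μ γ t) else ∅

/-- The number of points of the thinned contour, when there are several points left. -/
def thinCard (μ : ℕ) (γ : Finset ℤ) (t : ℕ) : ℕ :=
  if 2 ≤ (thinSeq μ γ t).card then (thinSeq μ γ t).card else 0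

lemma mem_lonely :
    s ∈ lonely μ γ t ↔ 2 ≤ (thinSeq μ γ t).card ∧ s ∈ isolated (Close μ t) (thinSeq μ γ t) := by
  unfold lonely
  split_ifs with h <;> simp [h]

lemma mem_of_mem_lonely (hs : s ∈ lonely μ γ t) : s ∈ γ :=
  thinSeq_subset μ γ t (mem_isolated.mp (mem_lonely.mp hs).2).1

lemma thinCard_zero_le (μ : ℕ) (γ : Finset ℤ) : thinCard μ γ 0 ≤ γ.card := by
  unfold thinCard
  split_ifs
  · exact le_rfl
  · exact Nat.zero_le _

lemma two_mul_thinCard_succ_le (μ : ℕ) (γ : Finset ℤ) (t : ℕ) :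
    2 * thinCard μ γ (t + 1) ≤ thinCard μ γ t + (lonely μ γ t).card := by
  obtain ⟨hsub, -, hcard⟩ := thinSeq_succ_spec μ γ t
  have := Finset.card_le_card hsub
  unfold thinCard lonely
  split_ifs <;> (try rw [Finset.card_empty]) <;> omega

/-- The potential `3 (n + μ + 3) thinCard n` pays for the sum, since `thinCard` is halved in each
step up to lonely points whereas `n + μ + 3` grows by a factor of at most `5 / 4`. -/
lemma sum_thinCard_le (hμ : 1 ≤ μ) (γ : Finset ℤ) (n : ℕ) :
    ∑ t ∈ Finset.range n, (t + μ + 3) * thinCard μ γ t ≤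
      3 * (μ + 3) * γ.card + 8 * ∑ t ∈ Finset.range n, (t + μ) * (lonely μ γ t).card := by
  suffices hpot : ∑ t ∈ Finset.range n, (t + μ + 3) * thinCard μ γ t +
      3 * ((n + μ + 3) * thinCard μ γ n) ≤
      3 * (μ + 3) * γ.card + 8 * ∑ t ∈ Finset.range n, (t + μ) * (lonely μ γ t).card from
    (Nat.le_add_right _ _).trans hpot
  induction n with
  | zero =>
    simpa [mul_assoc] using Nat.mul_le_mul_left (3 * (μ + 3)) (thinCard_zero_le μ γ)
  | succ n ih =>
    rw [Finset.sum_range_succ, Finset.sum_range_succ]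
    have hhalf : (4 * (n + 1 + μ + 3)) * (2 * thinCard μ γ (n + 1)) ≤
        (5 * (n + μ + 3)) * (thinCard μ γ n + (lonely μ γ n).card) :=
      Nat.mul_le_mul (by omega) (two_mul_thinCard_succ_le μ γ n)
    have hweight : (n + μ + 3) * (lonely μ γ n).card ≤ 4 * (n + μ) * (lonely μ γ n).card :=
      Nat.mul_le_mul_right _ (by omega)
    nlinarith

lemma half_le_sum_inv (k : ℕ) (hd : 0 < d) :
    (k : ℝ) / 2 ≤ ∑ u ∈ Finset.Ico d (2 ^ k * d), 1 / (u : ℝ) := by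
  induction k with
  | zero => simp
  | succ k ih =>
    set m := (2 : ℤ) ^ k * d with hm
    have hmpos : 0 < m := by positivity
    have hdm : d ≤ m := le_mul_of_one_le_left hd.le (one_le_pow₀ (by norm_num))
    have hdyadic : (1 : ℝ) / 2 ≤ ∑ u ∈ Finset.Ico m (2 * m), 1 / (u : ℝ) := by
      have hcard : ((Finset.Ico m (2 * m)).card : ℝ) = m := by
        rw [Int.card_Ico, two_mul, add_sub_cancel_right]
        exact_mod_cast Int.toNat_of_nonneg hmpos.le
      have := Finset.card_nsmul_le_sum (Finset.Ico m (2 * m)) (fun u : ℤ => 1 / (u : ℝ))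
        (1 / (2 * m)) fun u hu => by
          obtain ⟨hmu, hum⟩ := Finset.mem_Ico.mp hu
          exact one_div_le_one_div_of_le (by exact_mod_cast hmpos.trans_le hmu)
            (by exact_mod_cast hum.le)
      rw [nsmul_eq_mul, hcard] at this
      refine le_trans (le_of_eq ?_) this
      have := Int.cast_pos (R := ℝ).mpr hmpos
      field_simp
    rw [pow_succ', mul_assoc, ← hm, ← Finset.Ico_union_Ico_eq_Ico hdm (by omega : m ≤ 2 * m),
      Finset.sum_union (Finset.Ico_disjoint_Ico_consecutive _ _ _)]
    push_cast
    linarith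

lemma countIoc_eq_of_gap (hgap : ∀ q ∈ γ, 2 * |q - s| ≤ d ∨ d + g < |q - s|) (hd : 0 < d)
    (hdx : d ≤ s - x) (hxg : s - x < g) (hdy : d ≤ y - s) (hyg : y - s < d + g) :
    countIoc γ x y = (γ.filter fun q => 2 * |q - s| ≤ d).card := by
  unfold countIoc
  congr 1
  refine Finset.filter_congr fun q hq => ?_
  have := hgap q hq
  rcases abs_cases (q - s) with ⟨h, _⟩ | ⟨h, _⟩ <;> omega

lemma ofReal_inv_le_rightCut_of_gap (hα0 : 0 ≤ α) (hα2 : α ≤ 2) (hγ : Even γ.card)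
    (hgap : ∀ q ∈ γ, 2 * |q - s| ≤ d ∨ d + g < |q - s|)
    (hodd : Odd (γ.filter fun q => 2 * |q - s| ≤ d).card) (hd : 0 < d) (hdu : d ≤ u)
    (hug : u < g) :
    ENNReal.ofReal (1 / (9 * u)) ≤ rightCut (kern α) (enclosed γ) (s - u) := by
  have hu : (0 : ℝ) < u := by exact_mod_cast hd.trans_le hdu
  have hcard : ((Finset.Ico (s + d) (s + d + u)).card : ℝ) = u := by
    rw [Int.card_Ico, add_sub_cancel_left]
    exact_mod_cast Int.toNat_of_nonneg (by omega)
  calc ENNReal.ofReal (1 / (9 * u))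
      = (Finset.Ico (s + d) (s + d + u)).card • ENNReal.ofReal (1 / ((3 * u : ℤ) : ℝ) ^ 2) := by
        rw [← ENNReal.ofReal_nsmul, nsmul_eq_mul, hcard]
        congr 1
        push_cast
        field_simp
        norm_num
    _ ≤ ∑ y ∈ Finset.Ico (s + d) (s + d + u),
          if Separates (enclosed γ) (s - u) y then kern α (y - (s - u)) else 0 := by
        refine Finset.card_nsmul_le_sum _ _ _ fun y hy => ?_
        obtain ⟨hdy, hyu⟩ := Finset.mem_Ico.mp hy
        have hdist : 0 < y - (s - u) := by omega
        rw [if_pos]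
        · exact (inv_sq_le_kern hα2 (by omega)).trans
            (kern_antitoneOn hα0 hdist (show 0 < 3 * u by omega) (by omega))
        · rwa [separates_enclosed_iff hγ (by omega), countIoc_eq_of_gap hgap hd (by omega)
            (by omega) (by omega) (by omega)]
    _ ≤ rightCut (kern α) (enclosed γ) (s - u) := ENNReal.sum_le_tsum _

lemma card_le_cut (α : ℝ) (hγ : Even γ.card) :
    (γ.card : ℝ≥0∞) ≤ cut (kern α) (enclosed γ) := by
  have hsep (p : ℤ) (hp : p ∈ γ) : Separates (enclosed γ) (p - 1) p := by
    have hcount : countLE γ p = countLE γ (p - 1) + 1 := by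
      simpa [hp] using countLE_add_one γ (p - 1)
    rw [Separates, mem_enclosed hγ, mem_enclosed hγ, hcount]
    grind
  calc (γ.card : ℝ≥0∞) = γ.card • 1 := by rw [nsmul_one]
    _ ≤ ∑ p ∈ γ, rightCut (kern α) (enclosed γ) (p - 1) :=
        Finset.card_nsmul_le_sum _ _ _ fun p hp =>
          le_trans (by simp [hsep p hp, kern_one]) (ENNReal.le_tsum p)
    _ = ∑ x ∈ γ.map (Equiv.subRight 1).toEmbedding, rightCut (kern α) (enclosed γ) x := by
        rw [Finset.sum_map]
        rfl
    _ ≤ cut (kern α) (enclosed γ) := ENNReal.sum_le_tsum _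

lemma gap_of_mem_lonely (hs : s ∈ lonely μ γ t) (hq : q ∈ γ) :
    2 * |q - s| ≤ diamScale μ t ∨ diamScale μ t + gapScale μ t < |q - s| := by
  obtain ⟨s', hs', hqs'⟩ := exists_mem_thinSeq μ t hq
  by_cases hclose : Close μ t s s'
  · left
    rwa [← (mem_isolated.mp (mem_lonely.mp hs).2).2 s' hs' hclose]
  · right
    unfold Close at hclose
    have := diamScale_pos μ t
    have := abs_sub_le s q s'
    have := abs_sub_comm s q
    omega

lemma odd_card_of_mem_lonely (hunsplit : Unsplittable μ γ) (hs : s ∈ lonely μ γ t) :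
    Odd (γ.filter fun q => 2 * |q - s| ≤ diamScale μ t).card := by
  set B := γ.filter fun q => 2 * |q - s| ≤ diamScale μ t with hB
  by_contra heven
  rw [Nat.not_odd_iff_even] at heven
  have hd := diamScale_pos μ t
  have hsB : s ∈ B := by
    simpa [hB, mem_of_mem_lonely hs] using hd.le
  have hne : B ≠ γ := by
    obtain ⟨hcard, hiso⟩ := mem_lonely.mp hs
    obtain ⟨s', hs', hne⟩ := Finset.exists_mem_ne (s := thinSeq μ γ t) (by omega) s
    intro h
    have hs'B : s' ∈ B := h ▸ thinSeq_subset μ γ t hs'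
    refine hne ((mem_isolated.mp hiso).2 s' hs' ?_)
    have := (Finset.mem_filter.mp hs'B).2
    have := gapScale_pos μ t
    rw [Close, abs_sub_comm]
    omega
  have hlevel : level μ B ≤ t := level_le_iff.mpr fun p hp q hq => by
    have := (Finset.mem_filter.mp hp).2
    have := (Finset.mem_filter.mp hq).2
    have := neg_abs_le (p - s)
    have := le_abs_self (q - s)
    omega
  obtain ⟨p, hp, q, hq, hpq⟩ := hunsplit B (Finset.filter_subset _ _) ⟨s, hsB⟩ hne heven
  obtain ⟨hqγ, hqB⟩ := Finset.mem_sdiff.mp hq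
  have hps := (Finset.mem_filter.mp hp).2
  have hqs : ¬2 * |q - s| ≤ diamScale μ t := fun h => hqB (Finset.mem_filter.mpr ⟨hqγ, h⟩)
  have := (gap_of_mem_lonely hs hqγ).resolve_left hqs
  have := gapScale_mono μ hlevel
  have := abs_sub_le q p s
  have := abs_sub_comm p q
  omega

lemma add_le_sum_rightCut_of_mem_lonely (hα0 : 0 ≤ α) (hα2 : α ≤ 2) (hγ : Even γ.card)
    (hunsplit : Unsplittable μ γ) (hs : s ∈ lonely μ γ t) :
    ((t + μ : ℕ) : ℝ≥0∞) ≤ 18 * ∑ u ∈ Finset.Ico (diamScale μ t) (gapScale μ t),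
      rightCut (kern α) (enclosed γ) (s - u) := by
  have hd := diamScale_pos μ t
  have hpos (u : ℤ) (hu : u ∈ Finset.Ico (diamScale μ t) (gapScale μ t)) : (0 : ℝ) < u := by
    exact_mod_cast hd.trans_le (Finset.mem_Ico.mp hu).1
  calc ((t + μ : ℕ) : ℝ≥0∞) = ENNReal.ofReal ((t + μ : ℕ) : ℝ) := by rw [ENNReal.ofReal_natCast]
    _ ≤ ENNReal.ofReal (18 * ∑ u ∈ Finset.Ico (diamScale μ t) (gapScale μ t),
          1 / (9 * (u : ℝ))) := by
        have hsum : ((t + μ : ℕ) : ℝ) / 2 ≤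
          ∑ u ∈ Finset.Ico (diamScale μ t) (gapScale μ t), 1 / (u : ℝ) := half_le_sum_inv (t + μ) hd
        simp_rw [← one_div_mul_one_div]
        rw [← Finset.mul_sum]
        exact ENNReal.ofReal_le_ofReal (by linarith)
    _ = 18 * ∑ u ∈ Finset.Ico (diamScale μ t) (gapScale μ t),
          ENNReal.ofReal (1 / (9 * (u : ℝ))) := by
        rw [ENNReal.ofReal_mul (by norm_num), ENNReal.ofReal_ofNat,
          ENNReal.ofReal_sum_of_nonneg fun u hu => by have := hpos u hu; positivity]
    _ ≤ _ := by
        gcongr with u hu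
        obtain ⟨hdu, hug⟩ := Finset.mem_Ico.mp hu
        exact ofReal_inv_le_rightCut_of_gap hα0 hα2 hγ (fun q => gap_of_mem_lonely hs)
          (odd_card_of_mem_lonely hunsplit hs) hd hdu hug

/-- The sites from which a lonely point `i.2` on the scale `i.1` is seen. -/
def lonelyWindow (μ : ℕ) (i : (_ : ℕ) × ℤ) : Finset ℤ :=
  (Finset.Ico (diamScale μ i.1) (gapScale μ i.1)).map (Equiv.subLeft i.2).toEmbedding

lemma mem_lonelyWindow :
    x ∈ lonelyWindow μ ⟨t, s⟩ ↔ diamScale μ t ≤ s - x ∧ s - x < gapScale μ t := by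
  rw [lonelyWindow, Finset.mem_map_equiv, Finset.mem_Ico, Equiv.subLeft_symm_apply, neg_add_eq_sub]

lemma not_lt_of_mem_lonelyWindow {t' : ℕ} {s' : ℤ} (hs : s ∈ lonely μ γ t)
    (hs' : s' ∈ lonely μ γ t') (hx : x ∈ lonelyWindow μ ⟨t, s⟩)
    (hx' : x ∈ lonelyWindow μ ⟨t', s'⟩) : ¬t' < t := by
  intro hlt
  rw [mem_lonelyWindow] at hx hx'
  have := eight_mul_gapScale_le_diamScale (μ := μ) hlt
  have := diamScale_pos μ t
  have := diamScale_pos μ t'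
  have := gap_of_mem_lonely hs (mem_of_mem_lonely hs')
  rw [abs_of_neg (by omega)] at this
  omega

lemma pairwiseDisjoint_lonelyWindow (μ : ℕ) (γ : Finset ℤ) (n : ℕ) :
    (((Finset.range n).sigma (lonely μ γ) : Finset ((_ : ℕ) × ℤ)) :
      Set ((_ : ℕ) × ℤ)).PairwiseDisjoint (lonelyWindow μ) := by
  rintro ⟨t, s⟩ hi ⟨t', s'⟩ hi' hne
  have hs : s ∈ lonely μ γ t := (Finset.mem_sigma.mp (Finset.mem_coe.mp hi)).2
  have hs' : s' ∈ lonely μ γ t' := (Finset.mem_sigma.mp (Finset.mem_coe.mp hi')).2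
  refine Finset.disjoint_left.mpr fun x hx hx' => ?_
  obtain rfl : t = t' := le_antisymm (not_lt.mp (not_lt_of_mem_lonelyWindow hs hs' hx hx'))
    (not_lt.mp (not_lt_of_mem_lonelyWindow hs' hs hx' hx))
  rw [mem_lonelyWindow] at hx hx'
  have hclose : Close μ t s s' := by
    have := diamScale_pos μ t
    unfold Close
    grind
  rw [(mem_isolated.mp (mem_lonely.mp hs).2).2 s' (mem_isolated.mp (mem_lonely.mp hs').2).1
    hclose] at hne
  exact hne rfl

lemma sum_lonely_le (hα0 : 0 ≤ α) (hα2 : α ≤ 2) (hγ : Even γ.card)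
    (hunsplit : Unsplittable μ γ) (n : ℕ) :
    ((∑ t ∈ Finset.range n, (t + μ) * (lonely μ γ t).card : ℕ) : ℝ≥0∞) ≤
      18 * cut (kern α) (enclosed γ) := by
  calc ((∑ t ∈ Finset.range n, (t + μ) * (lonely μ γ t).card : ℕ) : ℝ≥0∞)
      = ∑ i ∈ (Finset.range n).sigma (lonely μ γ), ((i.1 + μ : ℕ) : ℝ≥0∞) := by
        rw [Finset.sum_sigma, Nat.cast_sum]
        refine Finset.sum_congr rfl fun t _ => ?_
        rw [mul_comm, Nat.cast_mul, ← nsmul_eq_mul]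
        exact (Finset.sum_const _).symm
    _ ≤ ∑ i ∈ (Finset.range n).sigma (lonely μ γ),
          18 * ∑ x ∈ lonelyWindow μ i, rightCut (kern α) (enclosed γ) x := by
        refine Finset.sum_le_sum fun i hi => ?_
        rw [lonelyWindow, Finset.sum_map]
        exact add_le_sum_rightCut_of_mem_lonely hα0 hα2 hγ hunsplit (Finset.mem_sigma.mp hi).2
    _ = 18 * ∑ x ∈ ((Finset.range n).sigma (lonely μ γ)).biUnion (lonelyWindow μ),
          rightCut (kern α) (enclosed γ) x := by
        rw [Finset.sum_biUnion (pairwiseDisjoint_lonelyWindow μ γ n), Finset.mul_sum]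
    _ ≤ 18 * cut (kern α) (enclosed γ) := by
        gcongr
        exact ENNReal.sum_le_tsum _

/-- The distance from `p` to the preceding point of `γ`, and `0` if there is none. -/
def predGap (γ : Finset ℤ) (p : ℤ) : ℕ := sInf {n : ℕ | 0 < n ∧ p - n ∈ γ}

lemma predGap_le (hq : q ∈ γ) (hqp : q < p) : (predGap γ p : ℤ) ≤ p - q := by
  have h : (p - q).toNat ∈ {n : ℕ | 0 < n ∧ p - n ∈ γ} :=
    ⟨by omega, by rwa [Int.toNat_of_nonneg (by omega), sub_sub_cancel]⟩
  have : predGap γ p ≤ (p - q).toNat := Nat.sInf_le h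
  omega

lemma sub_predGap_mem (h : 0 < predGap γ p) : p - predGap γ p ∈ γ :=
  (Nat.sInf_mem (Nat.nonempty_of_pos_sInf h)).2

lemma card_filter_predGap_le (μ : ℕ) (γ : Finset ℤ) (t : ℕ) :
    (γ.filter fun p => diamScale μ t < predGap γ p).card ≤ thinCard μ γ t := by
  have hnear : ∀ p ∈ γ, ∃ s ∈ thinSeq μ γ t, 2 * |p - s| ≤ diamScale μ t :=
    fun p hp => exists_mem_thinSeq μ t hp
  choose! f hf hfp using hnear
  have hne (p q : ℤ) (hp : p ∈ γ) (hq : q ∈ γ) (hqp : q < p) (hgap : diamScale μ t < predGap γ p) :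
      f p ≠ f q := by
    intro h
    have := predGap_le hq hqp
    have := hfp p hp
    have := h ▸ hfp q hq
    have := le_abs_self (p - f p)
    have := neg_abs_le (q - f p)
    omega
  rcases (γ.filter fun p => diamScale μ t < predGap γ p).eq_empty_or_nonempty with h | ⟨p, hp⟩
  · simp [h]
  have htwo : 2 ≤ (thinSeq μ γ t).card := by
    obtain ⟨hp, hgap⟩ := Finset.mem_filter.mp hp
    have hpos : 0 < predGap γ p := by
      have := diamScale_pos μ t
      omega
    exact Finset.one_lt_card.mpr ⟨f p, hf p hp, _, hf _ (sub_predGap_mem hpos),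
      hne p _ hp (sub_predGap_mem hpos) (by omega) hgap⟩
  rw [thinCard, if_pos htwo]
  refine Finset.card_le_card_of_injOn f (fun q hq => hf q (Finset.mem_filter.mp hq).1) ?_
  intro p hp q hq hpq
  obtain ⟨hp, hpgap⟩ := Finset.mem_filter.mp (Finset.mem_coe.mp hp)
  obtain ⟨hq, hqgap⟩ := Finset.mem_filter.mp (Finset.mem_coe.mp hq)
  by_contra hpq'
  rcases lt_or_gt_of_ne hpq' with hlt | hlt
  · exact hne q p hq hp hlt hqgap hpq.symm
  · exact hne p q hp hq hlt hpgap hpq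

lemma min_diamScale_le (μ : ℕ) (m : ℤ) (n : ℕ) :
    min m (diamScale μ n) ≤
      2 ^ ∑ t ∈ Finset.range n, if diamScale μ t < m then t + μ + 3 else 0 := by
  induction n with
  | zero => simp [diamScale]
  | succ n ih =>
    rw [Finset.sum_range_succ]
    split_ifs with h
    · rw [min_eq_right h.le] at ih
      refine (min_le_right _ _).trans ?_
      rw [pow_add, diamScale, mul_comm]
      exact mul_le_mul_of_nonneg_right ih (by positivity)
    · rw [min_eq_left (not_lt.mp h)] at ih
      exact (min_le_left _ _).trans ih

lemma log_one_add_le (μ : ℕ) {m n : ℕ} (hmn : m ≤ n) :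
    Real.log (1 + m) ≤
      ((1 + ∑ t ∈ Finset.range n, if diamScale μ t < m then t + μ + 3 else 0 : ℕ) : ℝ) := by
  set E := ∑ t ∈ Finset.range n, if diamScale μ t < m then t + μ + 3 else 0
  have hpow : m ≤ 2 ^ E := by
    have hlt := lt_diamScale μ n
    have hmin := min_diamScale_le μ m n
    rw [min_eq_left (by omega)] at hmin
    exact_mod_cast hmin
  have hpow' : 1 + m ≤ 2 ^ (1 + E) := by
    have := Nat.one_le_two_pow (n := E)
    rw [pow_add]
    omega
  calc Real.log (1 + m) ≤ Real.log (2 ^ (1 + E)) :=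
        Real.log_le_log (by positivity) (by exact_mod_cast hpow')
    _ = ((1 + E : ℕ) : ℝ) * Real.log 2 := Real.log_pow _ _
    _ ≤ ((1 + E : ℕ) : ℝ) :=
        mul_le_of_le_one_right (by positivity) (by linarith [Real.log_two_lt_d9])

/-- The logarithmic length of a contour, which controls the number of contours. -/
def logLength (γ : Finset ℤ) : ℝ := ∑ p ∈ γ, Real.log (1 + predGap γ p)

lemma exists_logLength_le (hμ : 1 ≤ μ) (γ : Finset ℤ) :
    ∃ n : ℕ, logLength γ ≤ ((γ.card + (3 * (μ + 3) * γ.card +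
      8 * ∑ t ∈ Finset.range n, (t + μ) * (lonely μ γ t).card) : ℕ) : ℝ) := by
  refine ⟨γ.sup (predGap γ), ?_⟩
  refine (Finset.sum_le_sum fun p hp => log_one_add_le μ (Finset.le_sup hp)).trans ?_
  rw [← Nat.cast_sum, Nat.cast_le, Finset.sum_add_distrib, Finset.sum_const, smul_eq_mul, mul_one]
  gcongr
  refine le_trans ?_ (sum_thinCard_le hμ γ _)
  rw [Finset.sum_comm]
  refine Finset.sum_le_sum fun t _ => ?_
  rw [← Finset.sum_filter, Finset.sum_const, smul_eq_mul, mul_comm]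
  exact Nat.mul_le_mul_left _ (card_filter_predGap_le μ γ t)

theorem logLength_le_cut (hα1 : 1 < α) (hα2 : α ≤ 2) (hμ : 1 ≤ μ) (hγ : Even γ.card)
    (hunsplit : Unsplittable μ γ) :
    logLength γ ≤ (3 * μ + 154) * (cut (kern α) (enclosed γ)).toReal := by
  obtain ⟨n, hn⟩ := exists_logLength_le hμ γ
  have hfin := cut_ne_top (isCoupling_kern hα1).tsum_ne_top (enclosed γ)
  have hcard : (γ.card : ℝ) ≤ (cut (kern α) (enclosed γ)).toReal := by
    simpa using ENNReal.toReal_mono hfin (card_le_cut α hγ)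
  have hlonely : ((∑ t ∈ Finset.range n, (t + μ) * (lonely μ γ t).card : ℕ) : ℝ) ≤
      18 * (cut (kern α) (enclosed γ)).toReal := by
    have := ENNReal.toReal_mono (ENNReal.mul_ne_top (by norm_num) hfin)
      (sum_lonely_le (by linarith) hα2 hγ hunsplit n)
    rwa [ENNReal.toReal_natCast, ENNReal.toReal_mul, ENNReal.toReal_ofNat] at this
  rw [Nat.cast_add, Nat.cast_add, Nat.cast_mul _ γ.card, Nat.cast_mul 8] at hn
  have := mul_le_mul_of_nonneg_left hcard (Nat.cast_nonneg (α := ℝ) (3 * (μ + 3)))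
  push_cast at hn hlonely this ⊢
  linarith

end

section

variable {γ : Finset ℤ} {p q m a : ℤ}

/-! ### Counting contours -/

lemma predGap_insert_of_le (h : p ≤ m) : predGap (insert m γ) p = predGap γ p := by
  unfold predGap
  congr 1
  ext n
  simp only [Set.mem_ofPred_eq, Finset.mem_insert]
  exact ⟨fun ⟨hn, h'⟩ => ⟨hn, h'.resolve_left (by omega)⟩, fun ⟨hn, h'⟩ => ⟨hn, Or.inr h'⟩⟩

lemma predGap_pos (hq : q ∈ γ) (hqp : q < p) : 0 < predGap γ p := by
  have h : (p - q).toNat ∈ {n : ℕ | 0 < n ∧ p - n ∈ γ} :=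
    ⟨by omega, by rwa [Int.toNat_of_nonneg (by omega), sub_sub_cancel]⟩
  exact (Nat.sInf_mem ⟨_, h⟩).1

lemma predGap_eq_zero (h : ∀ q ∈ γ, p ≤ q) : predGap γ p = 0 := by
  by_contra hne
  have := h _ (sub_predGap_mem (Nat.pos_of_ne_zero hne))
  omega

lemma predGap_add_one_of_mem (h : m ∈ γ) : predGap γ (m + 1) = 1 := by
  have := predGap_pos h (lt_add_one m)
  have := predGap_le h (lt_add_one m)
  omega

lemma predGap_add_one (h : m ∉ γ) (hq : q ∈ γ) (hqm : q < m) :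
    predGap γ (m + 1) = predGap γ m + 1 := by
  have hpos := predGap_pos hq hqm
  have hpos' := predGap_pos hq (hqm.trans (lt_add_one m))
  have hmem' := sub_predGap_mem hpos'
  have hle := predGap_le (sub_predGap_mem hpos) (by omega : _ < m + 1)
  have hne : m + 1 - (predGap γ (m + 1) : ℤ) ≠ m := fun h' => h (h' ▸ hmem')
  have hle' := predGap_le hmem' (by omega : _ < m)
  omega

/-- The exponential of the logarithmic length of a contour. -/
def gapProd (γ : Finset ℤ) : ℕ := ∏ p ∈ γ, (1 + predGap γ p)

lemma gapProd_pos (γ : Finset ℤ) : 0 < gapProd γ := Finset.prod_pos fun _ _ => by omega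

lemma log_gapProd (γ : Finset ℤ) : Real.log (gapProd γ) = logLength γ := by
  rw [gapProd, logLength]
  push_cast
  exact Real.log_prod fun p _ => by positivity

lemma gapProd_insert (h : ∀ x ∈ γ, x < m) :
    gapProd (insert m γ) = (1 + predGap γ m) * gapProd γ := by
  rw [gapProd, Finset.prod_insert fun h' => (h m h').false, predGap_insert_of_le le_rfl, gapProd]
  congr 1
  exact Finset.prod_congr rfl fun p hp => by rw [predGap_insert_of_le (h p hp).le]

lemma gapProd_singleton (a : ℤ) : gapProd {a} = 1 := by
  rw [gapProd, Finset.prod_singleton, predGap_eq_zero (by simp)]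

lemma one_add_sub_le_gapProd (hp : p ∈ γ) (hq : q ∈ γ) : 1 + q - p ≤ (gapProd γ : ℤ) := by
  induction γ using Finset.induction_on_max generalizing q with
  | empty => simp at hp
  | insert m γ hm ih =>
    have hpos := gapProd_pos γ
    rw [gapProd_insert hm]
    push_cast
    rcases Finset.mem_insert.mp hp with rfl | hpγ
    · have : q ≤ p := by
        rcases Finset.mem_insert.mp hq with rfl | hqγ
        · exact le_rfl
        · exact (hm q hqγ).le
      nlinarith
    rcases Finset.mem_insert.mp hq with rfl | hqγ
    · have := predGap_le hpγ (hm p hpγ)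
      have := ih hpγ (sub_predGap_mem (predGap_pos hpγ (hm p hpγ)))
      nlinarith
    · have := ih hpγ hqγ
      nlinarith

lemma inv_one_add_cube_add_le {x : ℝ} (hx : 0 < x) :
    (1 + x)⁻¹ ^ 3 * 2 + (1 + x)⁻¹ ≤ x⁻¹ := by
  have hdiff : x⁻¹ - ((1 + x)⁻¹ ^ 3 * 2 + (1 + x)⁻¹) = (1 + x ^ 2) / (x * (1 + x) ^ 3) := by
    field_simp
    ring
  rw [← sub_nonneg, hdiff]
  positivity

/-- The additional factor turns the bound into one that does not increase with `n`. -/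
lemma sum_powerset_inv_gapProd_cube_mul_le (a : ℤ) (n : ℕ) :
    ∑ γ ∈ (Finset.Ioc a (a + n)).powerset, (gapProd (insert a γ) : ℝ)⁻¹ ^ 3 *
      (1 + (predGap (insert a γ) (a + n + 1) : ℝ)⁻¹) ≤ 2 := by
  induction n with
  | zero => simp [gapProd_singleton, predGap_add_one_of_mem, one_add_one_eq_two]
  | succ n ih =>
    have hIoc : Finset.Ioc a (a + (n + 1 : ℕ)) = insert (a + n + 1) (Finset.Ioc a (a + n)) := by
      ext x
      simp only [Finset.mem_Ioc, Finset.mem_insert]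
      omega
    rw [hIoc, Finset.sum_powerset_insert (by simp), ← Finset.sum_add_distrib]
    refine le_trans (Finset.sum_le_sum fun γ hγ => ?_) ih
    have hlt : ∀ x ∈ insert a γ, x < a + n + 1 := by
      intro x hx
      rcases Finset.mem_insert.mp hx with rfl | hx
      · omega
      · have := Finset.mem_Ioc.mp (Finset.mem_powerset.mp hγ hx)
        omega
    have ha : a ∈ insert a γ := Finset.mem_insert_self _ _
    have hpos : (0 : ℝ) < predGap (insert a γ) (a + n + 1) := by
      exact_mod_cast predGap_pos ha (hlt a ha)
    have key := mul_le_mul_of_nonneg_left (inv_one_add_cube_add_le hpos)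
      (by positivity : 0 ≤ (gapProd (insert a γ) : ℝ)⁻¹ ^ 3)
    rw [Nat.cast_succ, ← add_assoc a, Finset.insert_comm, gapProd_insert hlt,
      predGap_add_one_of_mem (Finset.mem_insert_self _ _),
      predGap_add_one (fun h => (hlt _ h).false) ha (hlt a ha)]
    push_cast
    rw [mul_inv, mul_pow, inv_one, one_add_one_eq_two, add_comm _ (1 : ℝ)]
    linarith

lemma sum_inv_gapProd_cube_le {Γ : Finset (Finset ℤ)} (hΓ : ∀ γ ∈ Γ, IsLeast (γ : Set ℤ) a) :
    ∑ γ ∈ Γ, (gapProd γ : ℝ)⁻¹ ^ 3 ≤ 2 := by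
  obtain ⟨n, hn⟩ : ∃ n : ℕ, ∀ γ ∈ Γ, ∀ p ∈ γ, p ≤ a + n := by
    refine ⟨(Γ.biUnion id).sup fun p => (p - a).toNat, fun γ hγ p hp => ?_⟩
    have := Finset.le_sup (f := fun p => (p - a).toNat)
      (Finset.mem_biUnion.mpr ⟨γ, hγ, hp⟩ : p ∈ Γ.biUnion id)
    omega
  have hsub : Γ ⊆ (Finset.Ioc a (a + n)).powerset.image (insert a) := by
    intro γ hγ
    refine Finset.mem_image.mpr ⟨γ.erase a, Finset.mem_powerset.mpr fun p hp => ?_,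
      Finset.insert_erase (hΓ γ hγ).1⟩
    obtain ⟨hpa, hpγ⟩ := Finset.mem_erase.mp hp
    exact Finset.mem_Ioc.mpr ⟨lt_of_le_of_ne ((hΓ γ hγ).2 hpγ) hpa.symm, hn γ hγ p hpγ⟩
  have hinj : Set.InjOn (insert a) ((Finset.Ioc a (a + n)).powerset : Set (Finset ℤ)) := by
    refine Finset.insert_erase_invOn.2.injOn.mono fun γ hγ => ?_
    intro haγ
    simpa using Finset.mem_powerset.mp hγ haγ
  calc ∑ γ ∈ Γ, (gapProd γ : ℝ)⁻¹ ^ 3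
      ≤ ∑ γ ∈ (Finset.Ioc a (a + n)).powerset, (gapProd (insert a γ) : ℝ)⁻¹ ^ 3 := by
        rw [← Finset.sum_image (f := fun γ => (gapProd γ : ℝ)⁻¹ ^ 3) hinj]
        exact Finset.sum_le_sum_of_subset_of_nonneg hsub fun _ _ _ => by positivity
    _ ≤ ∑ γ ∈ (Finset.Ioc a (a + n)).powerset, (gapProd (insert a γ) : ℝ)⁻¹ ^ 3 *
          (1 + (predGap (insert a γ) (a + n + 1) : ℝ)⁻¹) :=
        Finset.sum_le_sum fun γ _ => le_mul_of_one_le_right (by positivity) (by simp)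
    _ ≤ 2 := sum_powerset_inv_gapProd_cube_mul_le a n

lemma two_le_gapProd (h : 0 ∈ hull γ) : 2 ≤ gapProd γ := by
  obtain ⟨p, hp, q, hq, hp0, hq0⟩ := mem_hull.mp h
  have := one_add_sub_le_gapProd hp hq
  omega

lemma sum_inv_gapProd_pow_five_le {Γ : Finset (Finset ℤ)} (hΓ : ∀ γ ∈ Γ, 0 ∈ hull γ) :
    ∑ γ ∈ Γ, (gapProd γ : ℝ)⁻¹ ^ 5 ≤ 2 := by
  have hleast : ∀ γ ∈ Γ, ∃ i : ℕ, 1 < i ∧ IsLeast (γ : Set ℤ) (2 - i) ∧ i ≤ gapProd γ := by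
    intro γ hγ
    obtain ⟨p, hp, q, hq, hp0, hq0⟩ := mem_hull.mp (hΓ γ hγ)
    have hmin := γ.isLeast_min' ⟨p, hp⟩
    have := hmin.2 hp
    have := one_add_sub_le_gapProd hmin.1 hq
    refine ⟨(2 - γ.min' ⟨p, hp⟩).toNat, by omega, ?_, by omega⟩
    rwa [Int.toNat_of_nonneg (by omega), sub_sub_cancel]
  choose! i hi hleast hle using hleast
  calc ∑ γ ∈ Γ, (gapProd γ : ℝ)⁻¹ ^ 5
      = ∑ j ∈ Finset.Ioc 1 (Γ.sup i + 1), ∑ γ ∈ Γ with i γ = j, (gapProd γ : ℝ)⁻¹ ^ 5 :=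
        (Finset.sum_fiberwise_of_maps_to (fun γ hγ => Finset.mem_Ioc.mpr
          ⟨hi γ hγ, (Finset.le_sup hγ).trans (Nat.le_succ _)⟩) _).symm
    _ ≤ ∑ j ∈ Finset.Ioc 1 (Γ.sup i + 1),
          ((j : ℝ) ^ 2)⁻¹ * ∑ γ ∈ Γ with i γ = j, (gapProd γ : ℝ)⁻¹ ^ 3 := by
        refine Finset.sum_le_sum fun j hj => ?_
        rw [Finset.mul_sum]
        refine Finset.sum_le_sum fun γ hγ => ?_
        obtain ⟨hγΓ, rfl⟩ := Finset.mem_filter.mp hγ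
        have hpos : (0 : ℝ) < i γ := by exact_mod_cast (zero_lt_one.trans (hi γ hγΓ))
        have : (i γ : ℝ) ≤ gapProd γ := by exact_mod_cast hle γ hγΓ
        rw [pow_add _ 2 3, ← inv_pow]
        gcongr
    _ ≤ ∑ j ∈ Finset.Ioc 1 (Γ.sup i + 1), ((j : ℝ) ^ 2)⁻¹ * 2 := by
        refine Finset.sum_le_sum fun j _ => mul_le_mul_of_nonneg_left ?_ (by positivity)
        refine sum_inv_gapProd_cube_le (a := 2 - j) fun γ hγ => ?_
        obtain ⟨hγΓ, rfl⟩ := Finset.mem_filter.mp hγ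
        exact hleast γ hγΓ
    _ ≤ 2 := by
        have hsq : ∑ j ∈ Finset.Ioc 1 (Γ.sup i + 1), ((j : ℝ) ^ 2)⁻¹ ≤ _ :=
          sum_Ioc_inv_sq_le_sub one_ne_zero (Nat.le_add_left 1 _)
        have : (0 : ℝ) ≤ ((Γ.sup i + 1 : ℕ) : ℝ)⁻¹ := by positivity
        rw [← Finset.sum_mul]
        rw [Nat.cast_one, inv_one] at hsq
        linarith

lemma sum_inv_gapProd_pow_le {Γ : Finset (Finset ℤ)} (hΓ : ∀ γ ∈ Γ, 0 ∈ hull γ) (n : ℕ) :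
    ∑ γ ∈ Γ, (gapProd γ : ℝ)⁻¹ ^ (n + 5) ≤ 2 * (1 / 2) ^ n := by
  calc ∑ γ ∈ Γ, (gapProd γ : ℝ)⁻¹ ^ (n + 5) ≤ ∑ γ ∈ Γ, (1 / 2) ^ n * (gapProd γ : ℝ)⁻¹ ^ 5 := by
        refine Finset.sum_le_sum fun γ hγ => ?_
        have : (2 : ℝ) ≤ gapProd γ := by exact_mod_cast two_le_gapProd (hΓ γ hγ)
        rw [pow_add, one_div]
        gcongr
    _ ≤ 2 * (1 / 2) ^ n := by
        rw [← Finset.mul_sum, mul_comm]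
        exact mul_le_mul_of_nonneg_right (sum_inv_gapProd_pow_five_le hΓ) (by positivity)

end

section

variable {α κ θ β c : ℝ} {J : ℤ → ℝ≥0∞} {k : ℤ → ℝ} {A I γ : Finset ℤ}

/-! ### Energies -/

/-- The energy of the configuration whose set of overturned spins is `A`, in a field `k` which
favours overturned spins where it is positive. -/
def energy (J : ℤ → ℝ≥0∞) (k : ℤ → ℝ) (A : Finset ℤ) : ℝ :=
  2 * (cut J A).toReal - 2 * ∑ x ∈ A, k x

lemma hamJ_eq (α : ℝ) {σ : ℤ → ℝ}
    (hσ : ∀ x y, 1 - σ x * σ y = if Separates A x y then 2 else 0) :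
    hamJ α σ = 2 * (cut (kern α) A).toReal := by
  have hterm (p : ℤ × ℤ) :
      (if p.1 < p.2 then |(p.1 : ℝ) - p.2| ^ (-α) * (1 - σ p.1 * σ p.2) else 0) =
        2 * (if Separates A p.1 p.2 then kern α (p.2 - p.1) else 0).toReal := by
    rw [hσ, abs_sub_comm, kern]
    by_cases hlt : p.1 < p.2
    · have hpos : (0 : ℝ) < p.2 - p.1 := sub_pos.mpr (Int.cast_lt.mpr hlt)
      rw [if_pos hlt, if_pos (sub_pos.mpr hlt), abs_of_pos hpos, ← Int.cast_sub]
      split_ifs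
      · rw [ENNReal.toReal_ofReal (by rw [Int.cast_sub]; positivity), mul_comm]
      · simp
    · simp [hlt]
  rw [hamJ, tsum_congr hterm, tsum_mul_left, ← ENNReal.tsum_toReal_eq, ENNReal.tsum_prod']
  · rfl
  · intro p
    split_ifs
    · exact kern_ne_top
    · exact ENNReal.zero_ne_top

lemma hamP_spinP (α : ℝ) (h : ℤ → ℝ) (A : Finset ℤ) :
    hamP α h (spinP A) = energy (kern α) (-h) A := by
  have hpair (x y : ℤ) : 1 - spinP A x * spinP A y = if Separates A x y then 2 else 0 := by
    by_cases hx : x ∈ A <;> by_cases hy : y ∈ A <;> simp [spinP, hx, hy] <;> norm_num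
  have hfield : ∑' x, h x * (1 - spinP A x) = ∑ x ∈ A, h x * 2 := by
    rw [tsum_eq_sum (s := A) fun x hx => by simp [spinP, hx]]
    refine Finset.sum_congr rfl fun x hx => ?_
    rw [spinP, if_pos hx]
    norm_num
  rw [hamP, hamJ_eq α hpair, hfield, energy, ← Finset.sum_mul]
  simp only [Pi.neg_apply, Finset.sum_neg_distrib]
  ring

lemma hamM_spinM (α : ℝ) (h : ℤ → ℝ) (A : Finset ℤ) :
    hamM α h (spinM A) = energy (kern α) h A := by
  have hpair (x y : ℤ) : 1 - spinM A x * spinM A y = if Separates A x y then 2 else 0 := by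
    by_cases hx : x ∈ A <;> by_cases hy : y ∈ A <;> simp [spinM, hx, hy] <;> norm_num
  have hfield : ∑' x, h x * (1 + spinM A x) = ∑ x ∈ A, h x * 2 := by
    rw [tsum_eq_sum (s := A) fun x hx => by simp [spinM, hx]]
    refine Finset.sum_congr rfl fun x hx => ?_
    rw [spinM, if_pos hx]
    norm_num
  rw [hamM, hamJ_eq α hpair, hfield, energy, ← Finset.sum_mul, mul_comm 2 (∑ x ∈ A, h x)]

lemma sum_sub_sum_symmDiff_le (k : ℤ → ℝ) (A I : Finset ℤ) :
    ∑ x ∈ A, k x - ∑ x ∈ symmDiff A I, k x ≤ ∑ x ∈ I, |k x| := by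
  have hA := Finset.sum_inter_add_sum_sdiff A I k
  have hI := Finset.sum_inter_add_sum_sdiff I A fun x => |k x|
  have hinter : ∑ x ∈ A ∩ I, k x ≤ ∑ x ∈ I ∩ A, |k x| := by
    rw [Finset.inter_comm]
    exact Finset.sum_le_sum fun x _ => le_abs_self _
  have hsdiff : -∑ x ∈ I \ A, k x ≤ ∑ x ∈ I \ A, |k x| := by
    rw [← Finset.sum_neg_distrib]
    exact Finset.sum_le_sum fun x _ => neg_le_abs _
  rw [symmDiff_def, Finset.sup_eq_union, Finset.sum_union disjoint_sdiff_sdiff]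
  linarith

lemma energy_symmDiff_add_le (hJ : ∑' z, J z ≠ ⊤) (hθ : 0 ≤ θ)
    (hcross : crossCut J (symmDiff A I) I ≤ ENNReal.ofReal θ * cut J I)
    (hfield : ∑ x ∈ I, |k x| ≤ κ * (cut J I).toReal) :
    energy J k (symmDiff A I) + 2 * (1 - κ - 2 * θ) * (cut J I).toReal ≤ energy J k A := by
  have hfin := ENNReal.mul_ne_top (ENNReal.ofReal_ne_top (r := θ)) (cut_ne_top hJ I)
  have hcut := congrArg ENNReal.toReal (cut_symmDiff_add J (symmDiff A I) I)
  rw [symmDiff_symmDiff_cancel_right, ENNReal.toReal_add (cut_ne_top hJ _)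
    (ENNReal.mul_ne_top (by norm_num) (ne_top_of_le_ne_top hfin hcross)),
    ENNReal.toReal_add (cut_ne_top hJ _) (cut_ne_top hJ _), ENNReal.toReal_mul,
    ENNReal.toReal_ofNat] at hcut
  have hcross' := ENNReal.toReal_mono hfin hcross
  rw [ENNReal.toReal_mul, ENNReal.toReal_ofReal hθ] at hcross'
  have hfield' := (sum_sub_sum_symmDiff_le k A I).trans hfield
  unfold energy
  linarith

/-- A field vanishing at the origin which is elsewhere dominated by `κ |x|^(1 - α)`. -/
structure IsSmallField (α κ : ℝ) (k : ℤ → ℝ) : Prop where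
  zero : k 0 = 0
  abs_le : ∀ x ≠ 0, |k x| ≤ κ * |(x : ℝ)| ^ (1 - α)

lemma IsSmallField.neg (hk : IsSmallField α κ k) : IsSmallField α κ (-k) where
  zero := by simp [hk.zero]
  abs_le x hx := by simpa using hk.abs_le x hx

lemma IsSmallField.nonneg (hk : IsSmallField α κ k) : 0 ≤ κ :=
  (abs_nonneg _).trans (by simpa using hk.abs_le 1 one_ne_zero)

lemma IsSmallField.sum_abs_le_cut (hk : IsSmallField α κ k) (hα : 1 < α) (A : Finset ℤ) :
    ∑ x ∈ A, |k x| ≤ κ * (cut (kern α) A).toReal := by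
  calc ∑ x ∈ A, |k x| = ∑ x ∈ A.erase 0, |k x| :=
        (Finset.sum_erase A (by rw [hk.zero, abs_zero])).symm
    _ ≤ κ * ∑ x ∈ A.erase 0, |(x : ℝ)| ^ (1 - α) := by
        rw [Finset.mul_sum]
        exact Finset.sum_le_sum fun x hx => hk.abs_le x (Finset.ne_of_mem_erase hx)
    _ ≤ κ * (cut (kern α) A).toReal := by
        refine mul_le_mul_of_nonneg_left ?_ hk.nonneg
        rw [← ENNReal.ofReal_le_iff_le_toReal (cut_ne_top (isCoupling_kern hα).tsum_ne_top A),
          ENNReal.ofReal_sum_of_nonneg fun x _ => by positivity]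
        exact sum_rpow_le_cut hα A

/-! ### The Peierls argument -/

lemma exists_scale (hα : 1 < α) (hθ : 0 < θ) :
    ∃ μ : ℕ, 1 ≤ μ ∧ ENNReal.ofReal (((2 ^ μ : ℕ) : ℝ) ^ (1 - α)) + 4 * (2 ^ μ)⁻¹ ≤
      ENNReal.ofReal θ := by
  have hpow : Filter.Tendsto (fun μ : ℕ => ((2 ^ μ : ℕ) : ℝ)) Filter.atTop Filter.atTop :=
    tendsto_natCast_atTop_atTop.comp (tendsto_pow_atTop_atTop_of_one_lt one_lt_two)
  have hrpow := ENNReal.tendsto_ofReal ((tendsto_rpow_neg_atTop (sub_pos.mpr hα)).comp hpow)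
  have hinv := ENNReal.Tendsto.const_mul (a := 4) (ENNReal.tendsto_pow_atTop_nhds_zero_of_lt_one
    (ENNReal.inv_lt_one.mpr ENNReal.one_lt_two)) (Or.inr (by norm_num))
  have hsum := hrpow.add hinv
  rw [ENNReal.ofReal_zero, mul_zero, add_zero] at hsum
  obtain ⟨μ, hle, hμ⟩ := ((hsum.eventually_le_const (ENNReal.ofReal_pos.mpr hθ)).and
    (Filter.eventually_ge_atTop 1)).exists
  refine ⟨μ, hμ, ?_⟩
  simpa only [Function.comp_apply, neg_sub, ENNReal.inv_pow] using hle

lemma IsContourPartition.enclosed_subset_Icc {μ : ℕ} {P : Finset (Finset ℤ)} {a b : ℤ}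
    (hP : IsContourPartition μ (flips A) P) (hγ : γ ∈ P) (hA : A ⊆ Finset.Icc a b) :
    enclosed γ ⊆ Finset.Icc a b := by
  intro x hx
  have hodd := (mem_enclosed (hP.even γ hγ)).mp hx
  obtain ⟨p, hp, hpx⟩ := exists_le_of_odd_countLE hodd
  obtain ⟨q, hq, hxq⟩ := exists_lt_of_odd_countLE (hP.even γ hγ) hodd
  have := Finset.mem_Icc.mp (flips_subset_Icc hA (hP.subset hγ hp))
  have := Finset.mem_Icc.mp (flips_subset_Icc hA (hP.subset hγ hq))
  rw [Finset.mem_Icc]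
  omega

lemma exists_contour_energy_add_le (hα1 : 1 < α) (hα2 : α ≤ 2) (hκ : κ < 1) :
    ∃ c : ℝ, 0 < c ∧ ∀ (k : ℤ → ℝ) (A : Finset ℤ) (a b : ℤ), IsSmallField α κ k → 0 ∈ A →
      A ⊆ Finset.Icc a b → ∃ γ : Finset ℤ, 0 ∈ hull γ ∧
        symmDiff A (enclosed γ) ⊆ Finset.Icc a b ∧
        energy (kern α) k (symmDiff A (enclosed γ)) + c * logLength γ ≤ energy (kern α) k A := by
  have hθ : 0 < (1 - κ) / 4 := by linarith
  obtain ⟨μ, hμ1, hμ⟩ := exists_scale hα1 hθ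
  refine ⟨(1 - κ) / (3 * μ + 154), div_pos (by linarith) (by positivity),
    fun k A a b hk h0 hA => ?_⟩
  obtain ⟨P, hP, hunsplit⟩ := exists_isContourPartition_unsplittable μ (even_card_flips A)
  obtain ⟨γ, hγ, hodd⟩ := hP.exists_odd_countLE ((mem_iff_odd_countLE_flips A 0).mp h0)
  have heven := hP.even γ hγ
  obtain ⟨p, hp, hp0⟩ := exists_le_of_odd_countLE hodd
  obtain ⟨q, hq, hq0⟩ := exists_lt_of_odd_countLE heven hodd
  refine ⟨γ, mem_hull.mpr ⟨p, hp, q, hq, hp0, hq0⟩,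
    symmDiff_le_sup.trans (Finset.union_subset hA (hP.enclosed_subset_Icc hγ hA)), ?_⟩
  have henergy := energy_symmDiff_add_le (isCoupling_kern hα1).tsum_ne_top hθ.le
    ((hP.crossCut_kern_le hα1 hγ).trans (by gcongr)) (hk.sum_abs_le_cut hα1 (enclosed γ))
  have hlength : (1 - κ) / (3 * μ + 154) * logLength γ ≤
      (1 - κ) * (cut (kern α) (enclosed γ)).toReal := by
    rw [div_mul_eq_mul_div, div_le_iff₀ (by positivity), mul_assoc, mul_comm (ENNReal.toReal _)]
    exact mul_le_mul_of_nonneg_left (logLength_le_cut hα1 hα2 hμ1 heven (hunsplit γ hγ))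
      (by linarith)
  linarith

lemma exp_neg_mul_le_of_logLength_le {n : ℕ} {E E' : ℝ} (hc : 0 < c) (hβ : n ≤ β * c)
    (hE : E' + c * logLength γ ≤ E) :
    Real.exp (-β * E) ≤ (gapProd γ : ℝ)⁻¹ ^ n * Real.exp (-β * E') := by
  have hβ0 : 0 ≤ β := nonneg_of_mul_nonneg_left (n.cast_nonneg.trans hβ) hc
  have hlog : 0 ≤ logLength γ := log_gapProd γ ▸ Real.log_natCast_nonneg _
  have hweight : (gapProd γ : ℝ)⁻¹ ^ n = Real.exp (-(n * logLength γ)) := by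
    rw [← log_gapProd, Real.exp_neg, Real.exp_nat_mul,
      Real.exp_log (by exact_mod_cast gapProd_pos γ), inv_pow]
  rw [hweight, ← Real.exp_add, Real.exp_le_exp]
  have := mul_le_mul_of_nonneg_right hβ hlog
  have := mul_le_mul_of_nonneg_left hE hβ0
  linarith

lemma sum_le_sum_image_mul_sum {X C : Type*} [DecidableEq C] {S T : Finset X} {g : X → C}
    {f : C → X → X} {p : C → ℝ} {w : X → ℝ} (hp : ∀ i, 0 ≤ p i) (hw : ∀ x, 0 ≤ w x)
    (hinj : ∀ i, Function.Injective (f i)) (hmem : ∀ x ∈ S, f (g x) x ∈ T)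
    (hle : ∀ x ∈ S, w x ≤ p (g x) * w (f (g x) x)) :
    ∑ x ∈ S, w x ≤ (∑ i ∈ S.image g, p i) * ∑ x ∈ T, w x := by
  classical
  rw [← Finset.sum_fiberwise_of_maps_to fun x => Finset.mem_image_of_mem g, Finset.sum_mul]
  refine Finset.sum_le_sum fun i _ => ?_
  calc ∑ x ∈ S with g x = i, w x ≤ ∑ x ∈ S with g x = i, p i * w (f i x) := by
        refine Finset.sum_le_sum fun x hx => ?_
        obtain ⟨hxS, rfl⟩ := Finset.mem_filter.mp hx
        exact hle x hxS
    _ = p i * ∑ y ∈ (S.filter (g · = i)).image (f i), w y := by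
        rw [Finset.sum_image (hinj i).injOn, Finset.mul_sum]
    _ ≤ p i * ∑ x ∈ T, w x := by
        refine mul_le_mul_of_nonneg_left (Finset.sum_le_sum_of_subset_of_nonneg ?_
          fun x _ _ => hw x) (hp i)
        rintro _ hy
        obtain ⟨x, hx, rfl⟩ := Finset.mem_image.mp hy
        obtain ⟨hxS, rfl⟩ := Finset.mem_filter.mp hx
        exact hmem x hxS

/-- The Gibbs probability that the spin at the origin is overturned. -/
def flipProb (α : ℝ) (k : ℤ → ℝ) (β : ℝ) (L : ℕ) : ℝ :=
  (∑ A ∈ box L with 0 ∈ A, Real.exp (-β * energy (kern α) k A)) /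
    ∑ A ∈ box L, Real.exp (-β * energy (kern α) k A)

lemma sum_exp_pos (L : ℕ) (f : Finset ℤ → ℝ) : 0 < ∑ A ∈ box L, Real.exp (f A) :=
  Finset.sum_pos (fun _ _ => Real.exp_pos _) ⟨∅, by simp [box]⟩

theorem exists_flipProb_le (hα1 : 1 < α) (hα2 : α ≤ 2) (hκ : κ < 1) :
    ∃ c : ℝ, 0 < c ∧ ∀ k : ℤ → ℝ, IsSmallField α κ k → ∀ (β : ℝ) (n L : ℕ), n + 5 ≤ β * c →
      flipProb α k β L ≤ 2 * (1 / 2) ^ n := by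
  obtain ⟨c, hc, hcontour⟩ := exists_contour_energy_add_le hα1 hα2 hκ
  refine ⟨c, hc, fun k hk β n L hβ => ?_⟩
  have hex (A : Finset ℤ) (hA : A ∈ (box L).filter (0 ∈ ·)) :=
    let hA := Finset.mem_filter.mp hA
    hcontour k A (-L) L hk hA.2 (Finset.mem_powerset.mp hA.1)
  choose! γ hhull hbox henergy using hex
  rw [flipProb, div_le_iff₀ (sum_exp_pos L _)]
  refine (sum_le_sum_image_mul_sum (g := γ) (f := fun γ A => symmDiff A (enclosed γ))
    (p := fun γ => (gapProd γ : ℝ)⁻¹ ^ (n + 5)) (fun _ => by positivity)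
    (fun _ => (Real.exp_pos _).le) (fun _ => symmDiff_left_injective _)
    (fun A hA => Finset.mem_powerset.mpr (hbox A hA))
    fun A hA => exp_neg_mul_le_of_logLength_le hc (by exact_mod_cast hβ) (henergy A hA)).trans ?_
  refine mul_le_mul_of_nonneg_right (sum_inv_gapProd_pow_le ?_ n) (sum_exp_pos L _).le
  exact Finset.forall_mem_image.mpr hhull

lemma avgP_eq (α : ℝ) (h : ℤ → ℝ) (β : ℝ) (L : ℕ) :
    avgP α h β L = 1 - 2 * flipProb α (-h) β L := by
  have hspin (A : Finset ℤ) (w : ℝ) : spinP A 0 * w = w - 2 * if 0 ∈ A then w else 0 := by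
    rw [spinP]
    split_ifs <;> ring
  simp only [avgP, hamP_spinP, hspin]
  rw [Finset.sum_sub_distrib, ← Finset.mul_sum, ← Finset.sum_filter, sub_div,
    div_self (sum_exp_pos L _).ne', mul_div_assoc, flipProb]

lemma avgM_eq (α : ℝ) (h : ℤ → ℝ) (β : ℝ) (L : ℕ) :
    avgM α h β L = -(1 - 2 * flipProb α h β L) := by
  have hspin (A : Finset ℤ) (w : ℝ) : spinM A 0 * w = 2 * (if 0 ∈ A then w else 0) - w := by
    rw [spinM]
    split_ifs <;> ring
  simp only [avgM, hamM_spinM, hspin]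
  rw [Finset.sum_sub_distrib, ← Finset.mul_sum, ← Finset.sum_filter, sub_div,
    div_self (sum_exp_pos L _).ne', mul_div_assoc, flipProb, neg_sub]

/-! ### Decaying fields -/

lemma exists_isSmallField_of_eventually {h : ℤ → ℝ}
    (hh : ∀ᶠ x in Filter.cofinite, |h x| ≤ κ * |(x : ℝ)| ^ (1 - α)) :
    ∃ R : ℕ, IsSmallField α (max κ 0) fun x => if |x| ≤ (R : ℤ) then 0 else h x := by
  obtain ⟨R, hR⟩ : ∃ R : ℕ, ∀ x : ℤ, R < |x| → |h x| ≤ κ * |(x : ℝ)| ^ (1 - α) := by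
    refine ⟨(Filter.eventually_cofinite.mp hh).toFinset.sup Int.natAbs, fun x hx => ?_⟩
    by_contra hnot
    rw [Int.abs_eq_natAbs, Nat.cast_lt] at hx
    exact hx.not_ge (Finset.le_sup (f := Int.natAbs)
      ((Filter.eventually_cofinite.mp hh).mem_toFinset.mpr hnot))
  refine ⟨R, by simp, fun x _ => ?_⟩
  split_ifs with hxR
  · rw [abs_zero]
    positivity
  · exact (hR x (not_le.mp hxR)).trans
      (mul_le_mul_of_nonneg_right (le_max_left _ _) (by positivity))

lemma eventually_abs_hf_le {δ : ℝ} (hs : ℝ) (hδ : α - 1 < δ) (hκ : 0 < κ) :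
    ∀ᶠ x : ℤ in Filter.cofinite, |hf hs δ x| ≤ κ * |(x : ℝ)| ^ (1 - α) := by
  have habs : Filter.Tendsto (fun x : ℤ => |(x : ℝ)|) Filter.cofinite Filter.atTop :=
    tendsto_norm_cocompact_atTop.comp Int.tendsto_coe_cofinite
  have hsmall := ((tendsto_rpow_neg_atTop (sub_pos.mpr hδ)).comp habs).const_mul |hs|
  rw [mul_zero] at hsmall
  filter_upwards [hsmall.eventually_le_const hκ, habs.eventually_gt_atTop 0] with x hx hx0
  have hxne : x ≠ 0 := by simpa using hx0
  rw [hf, if_neg hxne, abs_mul, abs_of_nonneg (Real.rpow_nonneg hx0.le _),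
    show -δ = -(δ - (α - 1)) + (1 - α) by ring, Real.rpow_add hx0, ← mul_assoc]
  exact mul_le_mul_of_nonneg_right hx (by positivity)

lemma eventually_abs_hf_sub_one_le (α hs : ℝ) :
    ∀ᶠ x : ℤ in Filter.cofinite, |hf hs (α - 1) x| ≤ |hs| * |(x : ℝ)| ^ (1 - α) := by
  filter_upwards [(Set.finite_singleton (0 : ℤ)).compl_mem_cofinite] with x hx
  have hx0 : x ≠ 0 := hx
  rw [hf, if_neg hx0, abs_mul, abs_of_nonneg (Real.rpow_nonneg (abs_nonneg _) _), neg_sub]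

lemma threshold_le_one (hα1 : 1 ≤ α) (hα2 : α < 2) :
    (8 - 4 * α) / ((2 : ℝ) ^ (3 - α) + 6 - 3 * α) ≤ 1 := by
  have : (1 : ℝ) ≤ 2 ^ (3 - α) := Real.one_le_rpow one_le_two (by linarith)
  rw [div_le_one (by linarith)]
  linarith

lemma threshold_two_le_one : 4 / (3 + 2 * Real.log 2) ≤ 1 := by
  have := Real.log_two_gt_d9
  rw [div_le_one (by positivity)]
  linarith

lemma exists_lt_one_eventually_abs_hf_le {δ hs : ℝ} (hα1 : 1 ≤ α) (hhs : 0 < hs)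
    (hcase : (α - 1 < δ) ∨
      (α < 2 ∧ δ = α - 1 ∧ hs < (8 - 4 * α) / ((2 : ℝ) ^ (3 - α) + 6 - 3 * α)) ∨
      (α = 2 ∧ δ = 1 ∧ hs < 4 / (3 + 2 * Real.log 2))) :
    ∃ κ < 1, ∀ᶠ x : ℤ in Filter.cofinite, |hf hs δ x| ≤ κ * |(x : ℝ)| ^ (1 - α) := by
  have hcritical (hδ : δ = α - 1) (hs1 : hs < 1) :
      ∃ κ < 1, ∀ᶠ x : ℤ in Filter.cofinite, |hf hs δ x| ≤ κ * |(x : ℝ)| ^ (1 - α) :=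
    ⟨|hs|, by rwa [abs_of_pos hhs], hδ ▸ eventually_abs_hf_sub_one_le α hs⟩
  rcases hcase with hδ | ⟨hα, hδ, hlt⟩ | ⟨hα, hδ, hlt⟩
  · exact ⟨1 / 2, one_half_lt_one, eventually_abs_hf_le hs hδ one_half_pos⟩
  · exact hcritical hδ (hlt.trans_le (threshold_le_one hα1 hα))
  · exact hcritical (by linarith) (hlt.trans_le threshold_two_le_one)

end

end LongRangeIsing

open LongRangeIsing

theorem phase_transition_decaying_field_general {α κ : ℝ} (hα1 : 1 < α) (hα2 : α ≤ 2) (hκ : κ < 1)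
    {h : ℤ → ℝ} (hh : ∀ᶠ x in Filter.cofinite, |h x| ≤ κ * |(x : ℝ)| ^ (1 - α)) :
    ∃ R : ℕ, ∀ ε : ℝ, 0 < ε → ∃ β₀ : ℝ, 0 < β₀ ∧ ∀ β : ℝ, β₀ ≤ β → ∀ L : ℕ,
      1 - ε ≤ avgP α (fun x => if |x| ≤ (R : ℤ) then 0 else h x) β L ∧
        avgM α (fun x => if |x| ≤ (R : ℤ) then 0 else h x) β L ≤ -(1 - ε) := by
  obtain ⟨R, hsmall⟩ := exists_isSmallField_of_eventually hh
  obtain ⟨c, hc, hflip⟩ := exists_flipProb_le hα1 hα2 (max_lt hκ zero_lt_one)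
  refine ⟨R, fun ε hε => ?_⟩
  obtain ⟨n, hn⟩ := exists_pow_lt_of_lt_one (div_pos hε four_pos) one_half_lt_one
  refine ⟨(n + 5) / c, by positivity, fun β hβ L => ?_⟩
  rw [div_le_iff₀ hc] at hβ
  have hplus := hflip _ hsmall.neg β n L hβ
  have hminus := hflip _ hsmall β n L hβ
  rw [avgP_eq, avgM_eq]
  constructor <;> linarith

/-- phase transition in the presence of a polynomially decaying field
`h_x = h⋆|x|^{-δ}`, after truncation inside a sufficiently large box `[-R,R]`, in the
regions (i) `δ > α−1`, (ii) `δ = α−1`, `α < 2`, `h⋆` small, (iii) `α = 2`, `δ = 1`,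
`h⋆` small. -/
theorem phase_transition_decaying_field (α δ hs : ℝ) (hα1 : 1 < α) (hα2 : α ≤ 2)
    (hδ : 0 < δ) (hhs : 0 < hs)
    (hcase : (α - 1 < δ) ∨
      (α < 2 ∧ δ = α - 1 ∧ hs < (8 - 4 * α) / ((2 : ℝ) ^ (3 - α) + 6 - 3 * α)) ∨
      (α = 2 ∧ δ = 1 ∧ hs < 4 / (3 + 2 * Real.log 2))) :
    ∃ R : ℕ, ∀ ε : ℝ, 0 < ε → ε < 1 →
      ∃ β₀ : ℝ, 0 < β₀ ∧ ∀ β : ℝ, β₀ ≤ β → ∀ L : ℕ,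
        1 - ε ≤ avgP α (hfTrunc hs δ R) β L ∧ avgM α (hfTrunc hs δ R) β L ≤ -(1 - ε) := by
  obtain ⟨κ, hκ, hfield⟩ := exists_lt_one_eventually_abs_hf_le hα1.le hhs hcase
  obtain ⟨R, hR⟩ := phase_transition_decaying_field_general hα1 hα2 hκ hfield
  exact ⟨R, fun ε hε _ => hR ε hε⟩
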